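/- Let R be a commutative ring containing ℚ, A = R[X,Y] a polynomial ring in two variables over R, and D a fixed point free locally nilpotent R-derivation of A. Then A is a polynomial ring in one variable over Ker(D), and Ker(D) is a polynomial ring in one variable over R. -/

import Mathlib

universe u

namespace LND
section basic
variable {k C : Type*} [CommRing k] [CommRing C] [Algebra k C] (D : Derivation k C C)

lemma iter_add (n : ℕ) (a b : C) : (⇑D)^[n] (a + b) = (⇑D)^[n] a + (⇑D)^[n] b :=
  iterate_map_add D n a b

lemma iter_zero (n : ℕ) : (⇑D)^[n] (0 : C) = 0 := iterate_map_zero D n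

lemma iter_mono {n m : ℕ} (h : n ≤ m) {a : C} (ha : (⇑D)^[n] a = 0) : (⇑D)^[m] a = 0 := by
  obtain ⟨c, rfl⟩ := Nat.exists_eq_add_of_le h
  rw [Nat.add_comm, Function.iterate_add_apply, ha, iter_zero]

lemma iter_mul_zero (N : ℕ) : ∀ (n m : ℕ) (a b : C), n + m = N → (⇑D)^[n] a = 0 →
    (⇑D)^[m] b = 0 → (⇑D)^[N] (a * b) = 0 := by
  induction N with
  | zero =>
    intro n m a b h ha hb
    obtain rfl : n = 0 := by omega
    simp at ha
    simp [ha]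
  | succ N ih =>
    intro n m a b h ha hb
    rcases n with _ | n
    · simp at ha
      subst ha
      rw [zero_mul, iter_zero]
    rcases m with _ | m
    · simp at hb
      subst hb
      rw [mul_zero, iter_zero]
    rw [Function.iterate_succ_apply, D.leibniz, iter_add, smul_eq_mul, smul_eq_mul,
      ih (n+1) m a (D b) (by omega) ha (by simpa using hb), mul_comm b,
      ih n (m+1) (D a) b (by omega) (by simpa using ha) hb, add_zero]

/-- locally nilpotent -/
def IsLN : Prop := ∀ a, ∃ n : ℕ, (⇑D)^[n] a = 0

/-- the subalgebra of elements on which `D` acts nilpotently -/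
def nilSub : Subalgebra k C where
  carrier := {a | ∃ n : ℕ, (⇑D)^[n] a = 0}
  mul_mem' := by
    rintro a b ⟨n, hn⟩ ⟨m, hm⟩
    exact ⟨n + m, iter_mul_zero D _ n m a b rfl hn hm⟩
  add_mem' := by
    rintro a b ⟨n, hn⟩ ⟨m, hm⟩
    exact ⟨n + m, by rw [iter_add, iter_mono D (by omega) hn, iter_mono D (by omega) hm, add_zero]⟩
  algebraMap_mem' := fun r => ⟨1, by simp⟩

/-- the kernel -/
def ker : Subalgebra k C where
  carrier := {a | D a = 0}
  mul_mem' := by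
    intro a b ha hb
    simp only [Set.mem_ofPred_eq] at *
    simp [ha, hb]
  add_mem' := by
    intro a b ha hb
    simp only [Set.mem_ofPred_eq] at *
    simp [ha, hb]
  algebraMap_mem' := fun r => by simp

@[simp] lemma mem_ker {a : C} : a ∈ ker D ↔ D a = 0 := Iff.rfl

lemma iter_mul_top (n m : ℕ) : ∃ c : ℕ, 0 < c ∧ ∀ a b : C, (⇑D)^[n+1] a = 0 →
    (⇑D)^[m+1] b = 0 → (⇑D)^[n+m] (a * b) = c * ((⇑D)^[n] a * (⇑D)^[m] b) := by
  induction h : n + m generalizing n m with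
  | zero =>
    obtain ⟨rfl, rfl⟩ : n = 0 ∧ m = 0 := by omega
    exact ⟨1, one_pos, by simp⟩
  | succ N ih =>
    rcases n with _ | n
    · rcases m with _ | m
      · omega
      obtain ⟨c, hc, h1⟩ := ih 0 m (by omega)
      refine ⟨c, hc, fun a b ha hb => ?_⟩
      have ha' : D a = 0 := by simpa using ha
      have := h1 a (D b) ha (by simpa using hb)
      rw [Function.iterate_succ_apply, D.leibniz, ha', smul_zero, add_zero, smul_eq_mul, this]
      simp
    rcases m with _ | m
    · obtain ⟨c, hc, h1⟩ := ih n 0 (by omega)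
      refine ⟨c, hc, fun a b ha hb => ?_⟩
      have hb' : D b = 0 := by simpa using hb
      have := h1 (D a) b (by simpa using ha) hb
      rw [Function.iterate_succ_apply, D.leibniz, hb', smul_zero, zero_add, smul_eq_mul, mul_comm b,
        this]
      simp
    obtain ⟨c, hc, h1⟩ := ih n (m+1) (by omega)
    obtain ⟨d, hd, h2⟩ := ih (n+1) m (by omega)
    refine ⟨c + d, by omega, fun a b ha hb => ?_⟩
    rw [Function.iterate_succ_apply, D.leibniz, iter_add, smul_eq_mul, smul_eq_mul,
      h2 a (D b) ha (by simpa using hb), mul_comm b, h1 (D a) b (by simpa using ha) hb]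
    simp only [Function.iterate_succ_apply]
    push_cast
    ring

lemma exists_top (hD : IsLN D) {a : C} (ha : a ≠ 0) :
    ∃ n, (⇑D)^[n] a ≠ 0 ∧ (⇑D)^[n+1] a = 0 := by
  classical
  have h := hD a
  have h0 : Nat.find h ≠ 0 := by
    intro h0
    have := Nat.find_spec h
    rw [h0] at this
    exact ha (by simpa using this)
  obtain ⟨n, hn⟩ := Nat.exists_eq_succ_of_ne_zero h0
  refine ⟨n, Nat.find_min h (by omega), ?_⟩
  have := Nat.find_spec h
  rwa [hn] at this

lemma ker_of_mul [IsDomain C] [CharZero C] (hD : IsLN D) {a b : C} (ha : a ≠ 0) (hb : b ≠ 0)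
    (hab : D (a * b) = 0) : D a = 0 := by
  obtain ⟨n, hn, hn'⟩ := exists_top D hD ha
  obtain ⟨m, hm, hm'⟩ := exists_top D hD hb
  obtain ⟨c, hc, h⟩ := iter_mul_top D n m
  rcases n with _ | n
  · simpa using hn'
  exfalso
  have h1 := h a b hn' hm'
  rw [iter_mono D (n := 1) (by omega) (by simpa using hab)] at h1
  have : (c : C) ≠ 0 := by exact_mod_cast hc.ne'
  exact mul_ne_zero this (mul_ne_zero hn hm) h1.symm

/-- `D` of a polynomial expression with coefficients in the kernel. -/
lemma deriv_aeval_ker (s : C) (P : Polynomial (ker D)) :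
    D (Polynomial.aeval s P) = Polynomial.aeval s (Polynomial.derivative P) * D s := by
  induction P using Polynomial.induction_on' with
  | add p q hp hq => simp [hp, hq, add_mul]
  | monomial n a =>
    have ha : D (a : C) = 0 := a.2
    simp only [Polynomial.aeval_monomial, Polynomial.derivative_monomial, D.leibniz, D.leibniz_pow]
    have h2 : algebraMap (ker D) C a = (a : C) := rfl
    simp [h2, ha]
    ring

/-- elements algebraic over the kernel are in the kernel -/
lemma ker_of_algebraic [IsDomain C] [CharZero C] {b : C} (P : Polynomial (ker D)) (hP : P ≠ 0)
    (h : Polynomial.aeval b P = 0) : D b = 0 := by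
  induction hn : P.natDegree using Nat.strong_induction_on generalizing P with
  | _ n ih =>
    by_contra hb
    have h1 := deriv_aeval_ker D b P
    rw [h, map_zero] at h1
    have h2 := (mul_eq_zero.1 h1.symm).resolve_right hb
    have hpos : P.natDegree ≠ 0 := by
      intro h0
      rw [Polynomial.natDegree_eq_zero] at h0
      obtain ⟨c, rfl⟩ := h0
      rw [Polynomial.aeval_C] at h
      apply hP
      have : c = 0 := Subtype.ext h
      simp [this]
    have hch : CharZero (ker D) := by
      refine ⟨fun a b hab => ?_⟩
      have := congrArg (fun x : ker D => (x : C)) hab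
      simpa using this
    refine hb (ih _ ?_ (Polynomial.derivative P) ?_ h2 rfl)
    · rw [← hn]; exact Polynomial.natDegree_derivative_lt hpos
    · intro h0
      exact hpos (Polynomial.derivative_eq_zero.1 h0)

lemma iter_slice_pow {s : C} (hs : D s = 1) (n : ℕ) : ∀ c, D c = 0 →
    (⇑D)^[n] (c * s ^ n) = (n.factorial : C) * c := by
  induction n with
  | zero => intro c _; simp
  | succ n ih =>
    intro c hc
    have : D (c * s ^ (n+1)) = ((n+1 : ℕ) * c) * s ^ n := by
      rw [D.leibniz, D.leibniz_pow, hs, hc]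
      simp
      ring
    rw [Function.iterate_succ_apply, this, ih _ (by simp [hc])]
    rw [Nat.factorial_succ]
    push_cast
    ring

lemma slice_surj [Algebra ℚ C] {s : C} (hs : D s = 1) (n : ℕ) :
    ∀ a, (⇑D)^[n] a = 0 → ∃ P : Polynomial (ker D), Polynomial.aeval s P = a := by
  induction n with
  | zero => intro a ha; exact ⟨0, by simpa using ha.symm⟩
  | succ n ih =>
    intro a ha
    set c : C := algebraMap ℚ C (n.factorial : ℚ)⁻¹ * (⇑D)^[n] a with hc
    have hcn : (n.factorial : C) * c = (⇑D)^[n] a := by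
      rw [hc, ← mul_assoc, ← map_natCast (algebraMap ℚ C), ← map_mul, mul_inv_cancel₀, map_one,
        one_mul]
      exact_mod_cast n.factorial_ne_zero
    have hDc : D c = 0 := by
      have h1 : D ((n.factorial : C) * c) = 0 := by
        rw [hcn, ← Function.iterate_succ_apply' D, ha]
      rw [hc, D.leibniz, ← Function.iterate_succ_apply' D, ha]
      have h3 : D (algebraMap ℚ C (n.factorial : ℚ)⁻¹) = 0 := by
        have := D.toAddMonoidHom.toRatLinearMap.map_smul (n.factorial : ℚ)⁻¹ 1
        rw [← Algebra.algebraMap_eq_smul_one] at this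
        have h4 : D.toAddMonoidHom.toRatLinearMap (1 : C) = 0 := D.map_one_eq_zero
        rw [h4, smul_zero] at this
        exact this
      rw [h3]; simp
    obtain ⟨P, hP⟩ := ih (a - c * s ^ n) (by
      rw [sub_eq_add_neg, iter_add, iterate_map_neg D, iter_slice_pow D hs n c hDc, hcn]
      simp)
    refine ⟨P + Polynomial.monomial n ⟨c, hDc⟩, ?_⟩
    rw [map_add, hP, Polynomial.aeval_monomial]
    show a - c * s ^ n + c * s ^ n = a
    ring

lemma slice_inj [Algebra ℚ C] {s : C} (hs : D s = 1) (P : Polynomial (ker D))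
    (h : Polynomial.aeval s P = 0) : P = 0 := by
  by_contra hP
  have key : ∀ n, Polynomial.aeval s (Polynomial.derivative^[n] P) = 0 := by
    intro n
    induction n with
    | zero => simpa using h
    | succ n ih =>
      have := deriv_aeval_ker D s (Polynomial.derivative^[n] P)
      rw [ih, hs, mul_one, map_zero] at this
      rw [Function.iterate_succ_apply']
      exact this.symm
  have h1 := key P.natDegree
  have h2 : (Polynomial.derivative^[P.natDegree] P).natDegree = 0 := by
    have := Polynomial.natDegree_iterate_derivative P P.natDegree
    omega
  rw [Polynomial.eq_C_of_natDegree_eq_zero h2, Polynomial.aeval_C, Polynomial.coeff_iterate_derivative,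
    zero_add, Nat.descFactorial_self] at h1
  have h3 : ((P.natDegree.factorial : ℕ) : C) * (P.leadingCoeff : C) = 0 := by
    rw [← nsmul_eq_mul]
    rw [map_nsmul] at h1
    exact h1
  have hu : IsUnit ((P.natDegree.factorial : ℕ) : C) := by
    rw [← map_natCast (algebraMap ℚ C)]
    apply IsUnit.map
    rw [isUnit_iff_ne_zero]
    exact_mod_cast P.natDegree.factorial_ne_zero
  have h4 := (hu.mul_right_eq_zero).1 h3
  exact hP (Polynomial.leadingCoeff_eq_zero.1 (Subtype.ext h4))

end basic
end LND

namespace LND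
open MvPolynomial

section trans
variable {k C : Type*} [Field k] [CommRing C] [IsDomain C] [CharZero C] [Algebra k C]
  (D : Derivation k C C)

lemma eq_zero_of_basis {ι : Type*} {x : ι → C} (hx : IsTranscendenceBasis k x)
    (h : ∀ i, D (x i) = 0) (b : C) : D b = 0 := by
  have halg := hx.isAlgebraic
  obtain ⟨P, hP, hPb⟩ := halg.isAlgebraic b
  have hle : Algebra.adjoin k (Set.range x) ≤ ker D := by
    rw [Algebra.adjoin_le_iff]
    rintro _ ⟨i, rfl⟩
    exact h i
  refine ker_of_algebraic D (P.map (Subalgebra.inclusion hle).toRingHom) ?_ ?_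
  · rwa [Polynomial.map_ne_zero_iff]
    exact Subalgebra.inclusion_injective hle
  · rw [Polynomial.aeval_def, Polynomial.eval₂_map]
    exact hPb

lemma trdeg_lt_two_basis (h : ¬ (2 : Cardinal) ≤ Algebra.trdeg k C) (c : C)
    (hc : Transcendental k c) : IsTranscendenceBasis k ![c] := by
  have hi : AlgebraicIndependent k ![c] := by
    rw [algebraicIndependent_unique_type_iff]
    exact hc
  apply hi.isTranscendenceBasis_of_lift_trdeg_le_of_finite
  have : Algebra.trdeg k C ≤ 1 := by
    rw [not_le] at h
    obtain ⟨n, hn⟩ := Cardinal.lt_aleph0.1 (h.trans (Cardinal.natCast_lt_aleph0 (n := 2)))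
    rw [hn] at h ⊢
    have h' : n < 2 := by exact_mod_cast h
    have h'' : n ≤ 1 := by omega
    exact_mod_cast h''
  simpa using this

end trans

section field
set_option linter.unusedSectionVars false
variable {k : Type*} [Field k] [CharZero k]
  (D : Derivation k (MvPolynomial (Fin 2) k) (MvPolynomial (Fin 2) k))

lemma dependent (hD : ∃ b, D b ≠ 0) {f g : MvPolynomial (Fin 2) k} (hf : D f = 0) (hg : D g = 0) :
    ∃ P : MvPolynomial (Fin 2) k, P ≠ 0 ∧ aeval ![f, g] P = 0 := by
  by_contra hcon
  push Not at hcon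
  have hi : AlgebraicIndependent k ![f, g] := by
    rw [algebraicIndependent_iff]
    intro P hP
    by_contra h
    exact hcon P h hP
  have hb : IsTranscendenceBasis k ![f, g] := by
    apply hi.isTranscendenceBasis_of_lift_trdeg_le_of_finite
    rw [MvPolynomial.trdeg_of_isDomain]
    simp
  obtain ⟨b, hb'⟩ := hD
  refine hb' (eq_zero_of_basis D hb ?_ b)
  intro i
  fin_cases i
  · exact hf
  · exact hg

lemma exists_local_slice {C : Type*} [CommRing C] [Algebra k C] (E : Derivation k C C)
    (hl : IsLN E) (hD : ∃ b, E b ≠ 0) :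
    ∃ r, E r ≠ 0 ∧ E (E r) = 0 := by
  obtain ⟨b, hb⟩ := hD
  obtain ⟨n, hn, hn'⟩ := exists_top E hl hb
  refine ⟨(⇑E)^[n] b, ?_, ?_⟩
  · rw [← Function.iterate_succ_apply' E, Function.iterate_succ_apply]; exact hn
  · rw [← Function.iterate_succ_apply' E, ← Function.iterate_succ_apply' E,
      Function.iterate_succ_apply]; exact hn'

lemma exists_nonconst (hl : IsLN D) (hD : ∃ b, D b ≠ 0) :
    ∃ g, D g = 0 ∧ g.totalDegree ≠ 0 := by
  by_contra hcon
  push Not at hcon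
  obtain ⟨r, hr, hr'⟩ := exists_local_slice D hl hD
  have hC : ∀ g, D g = 0 → ∃ c : k, g = C c := fun g hg =>
    ⟨_, totalDegree_eq_zero_iff_eq_C.1 (hcon g hg)⟩
  obtain ⟨c, hc⟩ := hC _ hr'
  have hc0 : c ≠ 0 := by rintro rfl; simp at hc; exact hr hc
  have hs : D (C c⁻¹ * r) = 1 := by
    rw [← smul_eq_C_mul, D.map_smul, hc, smul_eq_C_mul, ← C_mul, inv_mul_cancel₀ hc0, C_1]
  have htop : Algebra.adjoin k {C c⁻¹ * r} = ⊤ := by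
    rw [eq_top_iff]
    intro a _
    obtain ⟨n, hn⟩ := hl a
    obtain ⟨P, rfl⟩ := slice_surj D hs n a hn
    rw [Polynomial.aeval_def, Polynomial.eval₂_eq_sum_range]
    refine Subalgebra.sum_mem _ fun i _ => ?_
    obtain ⟨d, hd⟩ := hC (P.coeff i) (P.coeff i).2
    refine Subalgebra.mul_mem _ ?_ (Subalgebra.pow_mem _ (Algebra.subset_adjoin (Set.mem_singleton _)) _)
    have h5 : algebraMap (ker D) (MvPolynomial (Fin 2) k) (P.coeff i) = algebraMap k _ d := hd
    rw [h5]
    exact Subalgebra.algebraMap_mem _ _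
  have halg : Algebra.IsAlgebraic (Algebra.adjoin k {C c⁻¹ * r}) (MvPolynomial (Fin 2) k) := by
    refine ⟨fun x => ?_⟩
    have hx : x ∈ Algebra.adjoin k {C c⁻¹ * r} := by rw [htop]; trivial
    exact isAlgebraic_algebraMap (A := MvPolynomial (Fin 2) k)
      (⟨x, hx⟩ : Algebra.adjoin k {C c⁻¹ * r})
  have h1 := Algebra.IsAlgebraic.trdeg_le_cardinalMk k ({C c⁻¹ * r} : Set (MvPolynomial (Fin 2) k))
  rw [MvPolynomial.trdeg_of_isDomain] at h1
  simp at h1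

/-- split off the part divisible by the first variable -/
lemma split_X0 {R : Type*} [CommRing R] (P : MvPolynomial (Fin 2) R) : ∃ P1, P = X 0 * P1 +
    Polynomial.aeval (X 1 : MvPolynomial (Fin 2) R)
      (aeval ![(0 : Polynomial R), Polynomial.X] P) := by
  induction P using MvPolynomial.induction_on with
  | C a => exact ⟨0, by simp [algebraMap_eq]⟩
  | add p q hp hq =>
    obtain ⟨p1, hp⟩ := hp
    obtain ⟨q1, hq⟩ := hq
    refine ⟨p1 + q1, ?_⟩
    conv_lhs => rw [hp, hq]
    simp only [map_add]
    ring
  | mul_X p i hp =>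
    obtain ⟨p1, hp⟩ := hp
    fin_cases i
    · exact ⟨p, by simp [mul_comm]⟩
    · refine ⟨p1 * X 1, ?_⟩
      conv_lhs => rw [hp]
      simp
      ring

lemma dvd_of_dvd_aeval {f g : MvPolynomial (Fin 2) k} (hp : Prime f) (hf0 : constantCoeff f = 0)
    (hg0 : constantCoeff g = 0) (n : ℕ) : ∀ q : Polynomial k, q.natDegree ≤ n → q ≠ 0 →
      f ∣ Polynomial.aeval g q → f ∣ g := by
  induction n with
  | zero =>
    intro q hq hq0 hd
    exfalso
    rw [Polynomial.eq_C_of_natDegree_le_zero hq] at hd hq0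
    obtain ⟨t, ht⟩ := hd
    have := congrArg constantCoeff ht
    simp [hf0, algebraMap_eq] at this
    simp [this] at hq0
  | succ n ih =>
    intro q hq hq0 hd
    have hq' := Polynomial.divX_mul_X_add q
    have hcoeff : q.coeff 0 = 0 := by
      rw [← hq'] at hd
      obtain ⟨t, ht⟩ := hd
      have := congrArg constantCoeff ht
      simpa [hf0, hg0, algebraMap_eq] using this
    rw [hcoeff, Polynomial.C_0, add_zero] at hq'
    rw [← hq', map_mul, Polynomial.aeval_X] at hd
    rcases hp.dvd_or_dvd hd with h | h
    · refine ih q.divX ?_ ?_ h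
      · rw [Polynomial.natDegree_divX_eq_natDegree_tsub_one]; omega
      · intro h0; rw [h0, zero_mul] at hq'; exact hq0 hq'.symm
    · exact h

lemma dvd_of_ker (hD : ∃ b, D b ≠ 0) {f g : MvPolynomial (Fin 2) k} (hp : Prime f)
    (hf0 : constantCoeff f = 0) (hg0 : constantCoeff g = 0) (hf : D f = 0) (hg : D g = 0) :
    f ∣ g := by
  classical
  have hex : ∃ n, ∃ P : MvPolynomial (Fin 2) k, P.totalDegree = n ∧ P ≠ 0 ∧
      aeval ![f, g] P = 0 := by
    obtain ⟨P, h1, h2⟩ := dependent D hD hf hg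
    exact ⟨_, P, rfl, h1, h2⟩
  obtain ⟨P, hPd, hP0, hP⟩ := Nat.find_spec hex
  obtain ⟨P1, hP1⟩ := split_X0 P
  set q := aeval ![(0 : Polynomial k), Polynomial.X] P with hq
  have hrel : f * aeval ![f, g] P1 + Polynomial.aeval g q = 0 := by
    rw [← hP]
    conv_rhs => rw [hP1]
    simp [← Polynomial.aeval_algHom_apply]
  by_cases hq0 : q = 0
  · exfalso
    rw [hq0] at hrel hP1
    simp only [map_zero, add_zero] at hrel hP1
    have h1 := (mul_eq_zero.1 hrel).resolve_left hp.ne_zero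
    have hP10 : P1 ≠ 0 := by rintro rfl; simp at hP1; exact hP0 hP1
    refine Nat.find_min hex (m := P1.totalDegree) ?_ ⟨P1, rfl, hP10, h1⟩
    rw [← hPd, hP1, totalDegree_mul_of_isDomain (X_ne_zero 0) hP10, totalDegree_X]
    omega
  · refine dvd_of_dvd_aeval hp hf0 hg0 _ q le_rfl hq0 ?_
    refine ⟨- aeval ![f, g] P1, ?_⟩
    linear_combination hrel

lemma kernel_field (hl : IsLN D) (hD : ∃ b, D b ≠ 0) :
    ∃ f, D f = 0 ∧ (∀ c : k, Prime (f - C c)) ∧ ∀ g, D g = 0 → ∃ q : Polynomial k,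
      g = Polynomial.aeval f q := by
  classical
  have hex : ∃ n, ∃ g, g.totalDegree = n ∧ D g = 0 ∧ g.totalDegree ≠ 0 := by
    obtain ⟨g, h1, h2⟩ := exists_nonconst D hl hD
    exact ⟨_, g, rfl, h1, h2⟩
  obtain ⟨f0, hfd, hf0, hfn⟩ := Nat.find_spec hex
  have hmin : ∀ g, D g = 0 → g.totalDegree ≠ 0 → f0.totalDegree ≤ g.totalDegree := by
    intro g h1 h2
    rw [hfd]
    exact Nat.find_min' hex ⟨g, rfl, h1, h2⟩
  have hprime0 : ∀ c : k, Prime (f0 - C c) := by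
    intro c
    have hdeg : (f0 - C c).totalDegree ≤ f0.totalDegree := by
      refine (totalDegree_sub _ _).trans ?_
      simp
    have hne : (f0 - C c).totalDegree ≠ 0 := by
      intro h
      rw [totalDegree_eq_zero_iff_eq_C] at h
      apply hfn
      rw [totalDegree_eq_zero_iff_eq_C]
      have : f0 = C (coeff 0 (f0 - C c) + c) := by rw [C_add, ← h]; ring
      rw [this]; simp
    rw [← UniqueFactorizationMonoid.irreducible_iff_prime]
    refine ⟨?_, ?_⟩
    · intro hu
      rw [isUnit_iff_totalDegree_of_isReduced] at hu
      exact hne hu.2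
    · intro a b hab
      have hne0 : f0 - C c ≠ 0 := by intro h; rw [h] at hne; simp at hne
      have ha : a ≠ 0 := by rintro rfl; simp at hab; exact hne0 hab
      have hb : b ≠ 0 := by rintro rfl; simp at hab; exact hne0 hab
      have hDab : D (a * b) = 0 := by rw [← hab]; simp [hf0]
      have hDa := ker_of_mul D hl ha hb hDab
      have hDb := ker_of_mul D hl hb ha (by rwa [mul_comm])
      have hd := totalDegree_mul_of_isDomain ha hb
      rw [← hab] at hd
      have unit_of : ∀ e : MvPolynomial (Fin 2) k, e ≠ 0 → e.totalDegree = 0 → IsUnit e := by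
        intro e he h
        rw [totalDegree_eq_zero_iff_eq_C] at h
        rw [h]
        apply IsUnit.map
        rw [isUnit_iff_ne_zero]
        intro h0
        rw [h0, C_0] at h
        exact he h
      by_cases h1 : a.totalDegree = 0
      · exact Or.inl (unit_of a ha h1)
      by_cases h2 : b.totalDegree = 0
      · exact Or.inr (unit_of b hb h2)
      have := hmin a hDa h1
      omega
  refine ⟨f0 - C (constantCoeff f0), by simp [hf0], fun c => ?_, ?_⟩
  · have := hprime0 (constantCoeff f0 + c)
    rwa [C_add, ← sub_sub] at this
  · set f := f0 - C (constantCoeff f0) with hf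
    have hDf : D f = 0 := by simp [hf, hf0]
    have hfc : constantCoeff f = 0 := by simp [hf]
    have hfp : Prime f := hprime0 _
    have hfpos : f.totalDegree ≠ 0 := by
      intro h
      rw [totalDegree_eq_zero_iff_eq_C] at h
      have : f = 0 := by
        rw [h, ← constantCoeff_eq, hfc, C_0]
      exact hfp.ne_zero this
    intro g
    induction hn : g.totalDegree using Nat.strong_induction_on generalizing g with
    | _ n ih =>
      intro hg
      obtain ⟨g', hg'⟩ := dvd_of_ker D hD hfp hfc (g := g - C (constantCoeff g)) (by simp)
        hDf (by simp [hg])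
      by_cases h0 : g' = 0
      · refine ⟨Polynomial.C (constantCoeff g), ?_⟩
        rw [h0, mul_zero, sub_eq_zero] at hg'
        rw [Polynomial.aeval_C]; exact hg'
      have hDg' : D g' = 0 := by
        refine ker_of_mul D hl h0 hfp.ne_zero ?_
        rw [mul_comm, ← hg']; simp [hg]
      have hd := totalDegree_mul_of_isDomain hfp.ne_zero h0
      rw [← hg'] at hd
      have hd2 : (g - C (constantCoeff g)).totalDegree ≤ g.totalDegree := by
        refine (totalDegree_sub _ _).trans ?_
        simp
      obtain ⟨q, hq⟩ := ih g'.totalDegree (by omega) g' rfl hDg'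
      refine ⟨Polynomial.X * q + Polynomial.C (constantCoeff g), ?_⟩
      rw [map_add, map_mul, Polynomial.aeval_X, Polynomial.aeval_C, ← hq, ← hg', algebraMap_eq]
      ring

lemma fpf_ne {a b : MvPolynomial (Fin 2) k} (h : a * D (X 0) + b * D (X 1) = 1) :
    ∃ b, D b ≠ 0 := by
  by_contra hcon
  push Not at hcon
  rw [hcon, hcon] at h
  simp at h

lemma const_mod [IsAlgClosed k] (hfpf : ∃ a b, a * D (X 0) + b * D (X 1) = 1)
    {g : MvPolynomial (Fin 2) k} (hp : Prime g) (hg : D g = 0) {s : MvPolynomial (Fin 2) k}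
    (hs : g ∣ D s) : ∃ c : k, g ∣ s - C c := by
  set I := Ideal.span {g} with hI
  have hIp : I.IsPrime := (Ideal.span_singleton_prime hp.ne_zero).2 hp
  let π := Ideal.Quotient.mkₐ k I
  have hπ : Function.Surjective π := Ideal.Quotient.mkₐ_surjective k I
  have hπ0 : ∀ x, π x = 0 ↔ g ∣ x := by
    intro x
    show Ideal.Quotient.mk I x = 0 ↔ _
    rw [Ideal.Quotient.eq_zero_iff_mem, Ideal.mem_span_singleton]
  have hd : ∀ x, π x = 0 → π (D x) = 0 := by
    intro x hx
    rw [hπ0] at hx ⊢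
    obtain ⟨y, rfl⟩ := hx
    rw [D.leibniz, hg]
    simp
  let E := Derivation.liftOfSurjective hπ hd
  have hE : ∀ x, E (π x) = π (D x) := fun x => Derivation.liftOfSurjective_apply hπ hd x
  have hcz : CharZero (MvPolynomial (Fin 2) k ⧸ I) :=
    charZero_of_injective_algebraMap (algebraMap k _).injective
  by_cases halg : IsAlgebraic k (π s)
  · obtain ⟨c, hc⟩ := IsAlgClosed.algebraMap_bijective_of_isIntegral (k := k)
      (K := integralClosure k (MvPolynomial (Fin 2) k ⧸ I)) |>.2 ⟨π s, halg.isIntegral⟩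
    refine ⟨c, (hπ0 _).1 ?_⟩
    have h1 : algebraMap k (MvPolynomial (Fin 2) k ⧸ I) c = π s := congrArg Subtype.val hc
    rw [map_sub, ← algebraMap_eq, AlgHom.commutes, h1, sub_self]
  · exfalso
    have htr : ¬ (2 : Cardinal) ≤ Algebra.trdeg k (MvPolynomial (Fin 2) k ⧸ I) := by
      intro h2
      let x : Fin 2 → (MvPolynomial (Fin 2) k ⧸ I) := fun i => π (X i)
      have hax : aeval x = π := by
        apply algHom_ext; intro i; simp [x]
      have htop : Algebra.adjoin k (Set.range x) = ⊤ := by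
        rw [Algebra.adjoin_range_eq_range_aeval, hax]
        exact (AlgHom.range_eq_top _).2 hπ
      have halg : Algebra.IsAlgebraic (Algebra.adjoin k (Set.range x))
          (MvPolynomial (Fin 2) k ⧸ I) := by
        refine ⟨fun y => ?_⟩
        have hy : y ∈ Algebra.adjoin k (Set.range x) := by rw [htop]; trivial
        exact isAlgebraic_algebraMap (A := (MvPolynomial (Fin 2) k ⧸ I))
          (⟨y, hy⟩ : Algebra.adjoin k (Set.range x))
      have hb := Algebra.IsAlgebraic.isTranscendenceBasis_of_lift_le_trdeg_of_finite k x (by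
        simpa using h2)
      have hinj := hb.1
      rw [algebraicIndependent_iff] at hinj
      refine hp.ne_zero (hinj g ?_)
      rw [hax, hπ0]
    have hb := trdeg_lt_two_basis htr (π s) halg
    have hz := eq_zero_of_basis E hb (by
      intro i
      fin_cases i
      show E (π s) = 0
      rw [hE, hπ0]; exact hs)
    obtain ⟨a, b, hab⟩ := hfpf
    have := congrArg π hab
    rw [map_add, map_mul, map_mul, ← hE, ← hE, hz, hz, map_one] at this
    simp at this

lemma slice_field [IsAlgClosed k] (hl : IsLN D) (hfpf : ∃ a b, a * D (X 0) + b * D (X 1) = 1) :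
    ∃ f s, D s = 1 ∧ D f = 0 ∧ ∀ g, D g = 0 → ∃ q : Polynomial k,
      g = Polynomial.aeval f q := by
  classical
  have hD : ∃ b, D b ≠ 0 := by
    obtain ⟨a, b, h⟩ := hfpf
    exact fpf_ne D h
  obtain ⟨f, hf, hfp, hK⟩ := kernel_field D hl hD
  suffices h : ∃ s, D s = 1 by
    obtain ⟨s, hs⟩ := h
    exact ⟨f, s, hs, hf, hK⟩
  have hex : ∃ n, ∃ (q : Polynomial k) (s : _), q.natDegree = n ∧ q ≠ 0 ∧
      D s = Polynomial.aeval f q := by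
    obtain ⟨r, hr, hr'⟩ := exists_local_slice D hl hD
    obtain ⟨q, hq⟩ := hK _ hr'
    refine ⟨_, q, r, rfl, ?_, hq⟩
    rintro rfl
    simp at hq
    exact hr hq
  obtain ⟨q, s, hqd, hq0, hs⟩ := Nat.find_spec hex
  by_cases hdeg : q.natDegree = 0
  · obtain ⟨c, rfl⟩ := Polynomial.natDegree_eq_zero.1 hdeg
    have hc0 : c ≠ 0 := by rintro rfl; simp at hq0
    refine ⟨C c⁻¹ * s, ?_⟩
    rw [← smul_eq_C_mul, D.map_smul, hs, Polynomial.aeval_C, algebraMap_eq, smul_eq_C_mul, ← C_mul,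
      inv_mul_cancel₀ hc0, C_1]
  · exfalso
    obtain ⟨c, hc⟩ := IsAlgClosed.exists_root q (by
      intro h; exact hdeg (Polynomial.natDegree_eq_of_degree_eq_some h))
    obtain ⟨q1, hq1⟩ := Polynomial.dvd_iff_isRoot.2 hc
    have hs1 : D s = (f - C c) * Polynomial.aeval f q1 := by
      rw [hs, hq1]; simp [algebraMap_eq]
    have hg : D (f - C c) = 0 := by simp [hf]
    obtain ⟨μ, s', hs'⟩ := const_mod D hfpf (hfp c) hg ⟨_, hs1⟩
    have hq10 : q1 ≠ 0 := by rintro rfl; simp at hq1; exact hq0 hq1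
    refine Nat.find_min hex (m := q1.natDegree) ?_ ⟨q1, s', rfl, hq10, ?_⟩
    · rw [← hqd, hq1, Polynomial.natDegree_mul (Polynomial.X_sub_C_ne_zero c) hq10,
        Polynomial.natDegree_X_sub_C]
      omega
    · have h1 : D (s - C μ) = (f - C c) * D s' := by
        rw [hs', D.leibniz, hg]; simp
      have h2 : D (s - C μ) = D s := by simp
      rw [h2, hs1] at h1
      exact (mul_left_cancel₀ (hfp c).ne_zero h1).symm

end field
end LND

namespace LND
open MvPolynomial

section poly
variable {R S : Type*} [CommRing R] [CommRing S]

lemma pderiv_comm' (i j : Fin 2) (a : MvPolynomial (Fin 2) R) :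
    pderiv i (pderiv j a) = pderiv j (pderiv i a) := by
  have h : ⁅(pderiv i : Derivation R (MvPolynomial (Fin 2) R) (MvPolynomial (Fin 2) R)),
      (pderiv j : Derivation R (MvPolynomial (Fin 2) R) (MvPolynomial (Fin 2) R))⁆ = 0 := by
    apply derivation_ext
    intro l
    rw [Derivation.commutator_apply, pderiv_X, pderiv_X]
    simp [Pi.single_apply]
    split_ifs <;> simp
  have := congrArg (fun E : Derivation R (MvPolynomial (Fin 2) R) (MvPolynomial (Fin 2) R) => E a) h
  simp only [Derivation.commutator_apply] at this
  simpa [sub_eq_zero] using this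

lemma chain (E : Derivation R (MvPolynomial (Fin 2) R) (MvPolynomial (Fin 2) R))
    (f s F : MvPolynomial (Fin 2) R) : E (aeval ![f, s] F) =
      aeval ![f, s] (pderiv 0 F) * E f + aeval ![f, s] (pderiv 1 F) * E s := by
  induction F using MvPolynomial.induction_on with
  | C a => simp [algebraMap_eq]
  | add p q hp hq => simp only [map_add, hp, hq]; ring
  | mul_X p i hp =>
    simp only [map_mul, E.leibniz, hp, Derivation.leibniz, smul_eq_mul, map_add, aeval_X]
    fin_cases i
    · simp [pderiv_X]; ring
    · simp [pderiv_X]; ring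

lemma aeval_X01 (a : MvPolynomial (Fin 2) R) : aeval ![X 0, X 1] a = a := by
  have : (![X 0, X 1] : Fin 2 → MvPolynomial (Fin 2) R) = X := by
    ext1 i; fin_cases i <;> rfl
  rw [this, aeval_X_left_apply]

lemma D_eq (E : Derivation R (MvPolynomial (Fin 2) R) (MvPolynomial (Fin 2) R))
    (a : MvPolynomial (Fin 2) R) : E a = pderiv 0 a * E (X 0) + pderiv 1 a * E (X 1) := by
  have := chain E (X 0) (X 1) a
  simpa only [aeval_X01] using this

/-- base change of a derivation -/
noncomputable def bc (φ : R →+* S)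
    (D : Derivation R (MvPolynomial (Fin 2) R) (MvPolynomial (Fin 2) R)) :
    Derivation S (MvPolynomial (Fin 2) S) (MvPolynomial (Fin 2) S) :=
  mkDerivation S (fun i => map φ (D (X i)))

lemma bc_map (φ : R →+* S) (D : Derivation R (MvPolynomial (Fin 2) R) (MvPolynomial (Fin 2) R))
    (a : MvPolynomial (Fin 2) R) : bc φ D (map φ a) = map φ (D a) := by
  rw [D_eq (bc φ D), D_eq D a]
  simp [bc, pderiv_map]

lemma bc_iter (φ : R →+* S) (D : Derivation R (MvPolynomial (Fin 2) R) (MvPolynomial (Fin 2) R))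
    (n : ℕ) (a : MvPolynomial (Fin 2) R) :
    (⇑(bc φ D))^[n] (map φ a) = map φ ((⇑D)^[n] a) := by
  induction n generalizing a with
  | zero => rfl
  | succ n ih => rw [Function.iterate_succ_apply, Function.iterate_succ_apply, bc_map, ih]

lemma ln_of_gens (D : Derivation R (MvPolynomial (Fin 2) R) (MvPolynomial (Fin 2) R))
    (h : ∀ i, ∃ n : ℕ, (⇑D)^[n] (X i) = 0) : IsLN D := by
  intro a
  show a ∈ nilSub D
  have : (⊤ : Subalgebra R (MvPolynomial (Fin 2) R)) ≤ nilSub D := by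
    rw [← adjoin_range_X, Algebra.adjoin_le_iff]
    rintro _ ⟨i, rfl⟩
    exact h i
  exact this trivial

lemma bc_ln (φ : R →+* S) {D : Derivation R (MvPolynomial (Fin 2) R) (MvPolynomial (Fin 2) R)}
    (h : IsLN D) : IsLN (bc φ D) := by
  apply ln_of_gens
  intro i
  obtain ⟨n, hn⟩ := h (X i)
  refine ⟨n, ?_⟩
  have := bc_iter φ D n (X i)
  rw [hn, map_X, map_zero] at this
  exact this

/-- fixed point free -/
def Fpf (D : Derivation R (MvPolynomial (Fin 2) R) (MvPolynomial (Fin 2) R)) : Prop :=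
  ∃ a b, a * D (X 0) + b * D (X 1) = 1

lemma bc_fpf (φ : R →+* S) {D : Derivation R (MvPolynomial (Fin 2) R) (MvPolynomial (Fin 2) R)}
    (h : Fpf D) : Fpf (bc φ D) := by
  obtain ⟨a, b, h⟩ := h
  refine ⟨map φ a, map φ b, ?_⟩
  have := congrArg (map φ) h
  simpa [bc] using this

/-- Jacobian derivation -/
noncomputable def Jac (p : MvPolynomial (Fin 2) R) :
    Derivation R (MvPolynomial (Fin 2) R) (MvPolynomial (Fin 2) R) :=
  pderiv 0 p • pderiv 1 - pderiv 1 p • pderiv 0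

lemma Jac_apply (p a : MvPolynomial (Fin 2) R) :
    Jac p a = pderiv 0 p * pderiv 1 a - pderiv 1 p * pderiv 0 a := rfl

lemma Jac_anti (p a : MvPolynomial (Fin 2) R) : Jac p a = - Jac a p := by
  simp only [Jac_apply]; ring

lemma Jac_self (p : MvPolynomial (Fin 2) R) : Jac p p = 0 := by
  simp only [Jac_apply]; ring

lemma Jac_X0 (p : MvPolynomial (Fin 2) R) : Jac p (X 0) = - pderiv 1 p := by
  simp [Jac_apply, pderiv_X]

lemma Jac_X1 (p : MvPolynomial (Fin 2) R) : Jac p (X 1) = pderiv 0 p := by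
  simp [Jac_apply, pderiv_X]

lemma bc_Jac (φ : R →+* S) (p : MvPolynomial (Fin 2) R) : bc φ (Jac p) = Jac (map φ p) := by
  apply derivation_ext
  intro i
  fin_cases i
  · simp [bc, Jac_X0, pderiv_map]
  · simp [bc, Jac_X1, pderiv_map]

lemma surj_inj_noeth {A : Type*} [CommRing A] [IsNoetherianRing A] (φ : A →+* A)
    (h : Function.Surjective φ) : Function.Injective φ := by
  let K : ℕ →o Ideal A := ⟨fun n => RingHom.ker (φ ^ n), by
    apply monotone_nat_of_le_succ
    intro n x hx
    rw [RingHom.mem_ker] at hx ⊢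
    rw [pow_succ', RingHom.mul_def, RingHom.comp_apply, hx, map_zero]⟩
  obtain ⟨n, hn⟩ := monotone_stabilizes_iff_noetherian.2 ‹IsNoetherianRing A› K
  rw [injective_iff_map_eq_zero]
  intro x hx
  have hs : Function.Surjective (φ ^ n) := by
    rw [RingHom.coe_pow]; exact h.iterate n
  obtain ⟨y, rfl⟩ := hs x
  have hy : y ∈ K (n+1) := by
    show y ∈ RingHom.ker (φ ^ (n+1))
    rw [RingHom.mem_ker, pow_succ', RingHom.mul_def, RingHom.comp_apply, hx]
  rw [← hn (n+1) (by omega)] at hy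
  exact hy

/-- `f, s` are coordinates with `D f = 0`, `D s = 1` -/
def Good (D : Derivation R (MvPolynomial (Fin 2) R) (MvPolynomial (Fin 2) R))
    (f s : MvPolynomial (Fin 2) R) : Prop :=
  D f = 0 ∧ D s = 1 ∧
    Function.Bijective (aeval ![f, s] : MvPolynomial (Fin 2) R →ₐ[R] MvPolynomial (Fin 2) R)

lemma Good.injf {D : Derivation R (MvPolynomial (Fin 2) R) (MvPolynomial (Fin 2) R)}
    {f s : MvPolynomial (Fin 2) R} (h : Good D f s) (q : Polynomial R)
    (hq : Polynomial.aeval f q = 0) : q = 0 := by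
  have h1 : aeval ![f, s] (Polynomial.aeval (X 0 : MvPolynomial (Fin 2) R) q) = 0 := by
    rw [← Polynomial.aeval_algHom_apply]; simpa using hq
  have h2 := (injective_iff_map_eq_zero _).1 h.2.2.1 _ h1
  have h3 := congrArg (aeval ![(Polynomial.X : Polynomial R), 0]) h2
  rw [← Polynomial.aeval_algHom_apply] at h3
  simpa using h3

lemma bij_of_surj [IsNoetherianRing R] {f s : MvPolynomial (Fin 2) R}
    (h : Function.Surjective (aeval ![f, s] : MvPolynomial (Fin 2) R →ₐ[R] MvPolynomial (Fin 2) R)) :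
    Function.Bijective (aeval ![f, s] : MvPolynomial (Fin 2) R →ₐ[R] MvPolynomial (Fin 2) R) :=
  ⟨surj_inj_noeth (aeval ![f, s] : MvPolynomial (Fin 2) R →ₐ[R] MvPolynomial (Fin 2) R).toRingHom h,
    h⟩

variable [Algebra ℚ R]

lemma Good.ker {D : Derivation R (MvPolynomial (Fin 2) R) (MvPolynomial (Fin 2) R)}
    {f s : MvPolynomial (Fin 2) R} (h : Good D f s) (g : MvPolynomial (Fin 2) R) (hg : D g = 0) :
    ∃ q : Polynomial R, g = Polynomial.aeval f q := by
  obtain ⟨F, hF⟩ := h.2.2.2 g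
  let f' : LND.ker D := ⟨f, h.1⟩
  let g' : LND.ker D := ⟨g, hg⟩
  let Q : Polynomial (LND.ker D) := aeval ![Polynomial.C f', Polynomial.X] F
  have hQ : Polynomial.aeval s Q = aeval ![f, s] F := by
    have : ((Polynomial.aeval s : Polynomial (LND.ker D) →ₐ[LND.ker D] _).restrictScalars R).comp
        (aeval ![Polynomial.C f', Polynomial.X]) = aeval ![f, s] := by
      apply algHom_ext
      intro i
      fin_cases i
      · simp; rfl
      · simp
    exact congrArg (fun ψ => ψ F) this
  have h0 : Q + Polynomial.C (-g') = 0 := by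
    apply slice_inj D h.2.1
    refine (map_add (Polynomial.aeval s) _ _).trans ?_
    rw [hQ, hF, Polynomial.aeval_C]
    exact add_neg_cancel g
  refine ⟨aeval ![Polynomial.X, 0] F, ?_⟩
  have h1 : Polynomial.eval 0 Q = g' := by
    have h5 := congrArg (Polynomial.eval 0) h0
    rw [Polynomial.eval_add, Polynomial.eval_C, Polynomial.eval_zero] at h5
    exact eq_of_sub_eq_zero ((sub_eq_add_neg _ _).trans h5)
  have h2 : ((Polynomial.eval 0 Q : LND.ker D) : MvPolynomial (Fin 2) R) =
      Polynomial.aeval f (aeval ![(Polynomial.X : Polynomial R), 0] F) := by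
    have : ((LND.ker D).val.comp ((Polynomial.aeval (0 : LND.ker D) :
        Polynomial (LND.ker D) →ₐ[LND.ker D] _).restrictScalars R)).comp
        (aeval ![Polynomial.C f', Polynomial.X]) =
        (Polynomial.aeval f).comp (aeval ![(Polynomial.X : Polynomial R), 0]) := by
      apply algHom_ext
      intro i
      fin_cases i
      · simp [f']
      · simp
    have h3 := congrArg (fun ψ => ψ F) this
    simpa [Q, Polynomial.coe_aeval_eq_eval] using h3
  rw [← h2, h1]

lemma good_of [IsNoetherianRing R]
    {D : Derivation R (MvPolynomial (Fin 2) R) (MvPolynomial (Fin 2) R)} (hl : IsLN D)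
    {f s : MvPolynomial (Fin 2) R} (hf : D f = 0) (hs : D s = 1)
    (hK : ∀ g, D g = 0 → ∃ q : Polynomial R, g = Polynomial.aeval f q) : Good D f s := by
  refine ⟨hf, hs, bij_of_surj ?_⟩
  intro a
  obtain ⟨n, hn⟩ := hl a
  obtain ⟨P, rfl⟩ := slice_surj D hs n a hn
  rw [← AlgHom.mem_range, Polynomial.aeval_def, Polynomial.eval₂_eq_sum_range]
  have hfm : f ∈ (aeval ![f, s] : MvPolynomial (Fin 2) R →ₐ[R] MvPolynomial (Fin 2) R).range :=
    ⟨X 0, by simp⟩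
  have hsm : s ∈ (aeval ![f, s] : MvPolynomial (Fin 2) R →ₐ[R] MvPolynomial (Fin 2) R).range :=
    ⟨X 1, by simp⟩
  refine Subalgebra.sum_mem _ fun i _ => Subalgebra.mul_mem _ ?_ (Subalgebra.pow_mem _ hsm _)
  obtain ⟨q, hq⟩ := hK (P.coeff i) (P.coeff i).2
  have : algebraMap (LND.ker D) (MvPolynomial (Fin 2) R) (P.coeff i) = Polynomial.aeval f q := hq
  rw [this]
  have hle := Algebra.adjoin_le (S := (aeval ![f, s] :
    MvPolynomial (Fin 2) R →ₐ[R] MvPolynomial (Fin 2) R).range) (s := {f}) (by simpa using hfm)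
  exact hle (Polynomial.aeval_mem_adjoin_singleton R f)

end poly
end LND

namespace LND
open MvPolynomial

section fieldcons
variable {k : Type*} [Field k] [CharZero k] [IsAlgClosed k]

lemma good_field {D : Derivation k (MvPolynomial (Fin 2) k) (MvPolynomial (Fin 2) k)}
    (hl : IsLN D) (hfpf : Fpf D) : ∃ f s, Good D f s := by
  obtain ⟨f, s, hs, hf, hK⟩ := slice_field D hl hfpf
  exact ⟨f, s, good_of hl hf hs hK⟩

end fieldcons

lemma jac_unit {R : Type*} [CommRing R] {f s : MvPolynomial (Fin 2) R}
    (h : Function.Surjective (aeval ![f, s] : MvPolynomial (Fin 2) R →ₐ[R] MvPolynomial (Fin 2) R)) :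
    IsUnit (Jac f s) := by
  obtain ⟨F0, h0⟩ := h (X 0)
  obtain ⟨F1, h1⟩ := h (X 1)
  have e1 : Jac (X 0 : MvPolynomial (Fin 2) R) (X 1) = 1 := by rw [Jac_X1]; simp
  have a1 := chain (Jac (X 0)) f s F1
  have a2 := chain (Jac f) f s F0
  have a3 := chain (Jac s) f s F0
  rw [h1, e1, Jac_anti _ f, Jac_anti _ s] at a1
  rw [h0, Jac_self] at a2
  rw [h0, Jac_self, Jac_anti s f] at a3
  rw [a2, a3] at a1
  refine IsUnit.of_mul_eq_one (- aeval ![f, s] (pderiv 0 F1) * aeval ![f, s] (pderiv 1 F0)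
    + aeval ![f, s] (pderiv 1 F1) * aeval ![f, s] (pderiv 0 F0)) ?_
  rw [a1]; ring

lemma Good.jac {R : Type*} [CommRing R]
    {D : Derivation R (MvPolynomial (Fin 2) R) (MvPolynomial (Fin 2) R)}
    {f s : MvPolynomial (Fin 2) R} (h : Good D f s) (a : MvPolynomial (Fin 2) R) :
    Jac f a = Jac f s * D a := by
  obtain ⟨F, rfl⟩ := h.2.2.2 a
  rw [chain, chain, h.1, h.2.1, Jac_self]
  ring

/-- divergence -/
noncomputable def dv {R : Type*} [CommRing R]
    (D : Derivation R (MvPolynomial (Fin 2) R) (MvPolynomial (Fin 2) R)) : MvPolynomial (Fin 2) R :=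
  pderiv 0 (D (X 0)) + pderiv 1 (D (X 1))

section fieldcons
variable {k : Type*} [Field k] [CharZero k] [IsAlgClosed k]

lemma dv_field {D : Derivation k (MvPolynomial (Fin 2) k) (MvPolynomial (Fin 2) k)}
    (hl : IsLN D) (hfpf : Fpf D) : dv D = 0 := by
  obtain ⟨f, s, h⟩ := good_field hl hfpf
  obtain ⟨c, hc, hw⟩ := isUnit_iff_eq_C_of_isReduced.1 (jac_unit h.2.2.2)
  have h0 := h.jac (X 0)
  have h1 := h.jac (X 1)
  rw [hw, Jac_X0] at h0
  rw [hw, Jac_X1] at h1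
  have e0 := congrArg (pderiv 0) h0
  have e1 := congrArg (pderiv 1) h1
  rw [pderiv_C_mul] at e0 e1
  have h2 : C c * dv D = 0 := by
    rw [dv, mul_add, ← e0, ← e1, map_neg, pderiv_comm']
    ring
  have : IsUnit (C c : MvPolynomial (Fin 2) k) := hc.map C
  exact (this.mul_right_eq_zero).1 h2

lemma jac_field {p : MvPolynomial (Fin 2) k} (hl : IsLN (Jac p)) (hfpf : Fpf (Jac p)) :
    ∃ s, Good (Jac p) p s := by
  obtain ⟨f, s, h⟩ := good_field hl hfpf
  refine ⟨s, good_of hl (Jac_self p) h.2.1 ?_⟩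
  obtain ⟨q, hq⟩ := h.ker p (Jac_self p)
  have hqd : ∀ E : Derivation k (MvPolynomial (Fin 2) k) (MvPolynomial (Fin 2) k),
      E (Polynomial.aeval f q) = Polynomial.aeval f (Polynomial.derivative q) * E f := by
    intro E
    rw [Derivation.map_aeval, smul_eq_mul]
  have h1 : Jac p s = Polynomial.aeval f (Polynomial.derivative q) * Jac f s := by
    rw [Jac_anti p s, hq, hqd, Jac_anti s f]; ring
  rw [h.2.1] at h1
  obtain ⟨c, hc, hw⟩ := isUnit_iff_eq_C_of_isReduced.1 (IsUnit.of_mul_eq_one _ h1.symm)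
  have h2 : Polynomial.derivative q - Polynomial.C c = 0 := by
    apply h.injf
    rw [map_sub, hw, Polynomial.aeval_C, algebraMap_eq, sub_self]
  have h3 : Polynomial.derivative (q - Polynomial.C c * Polynomial.X) = 0 := by
    simpa using h2
  obtain ⟨d, hd⟩ := Polynomial.natDegree_eq_zero.1 (Polynomial.derivative_eq_zero.1 h3)
  have hc0 : c ≠ 0 := hc.ne_zero
  have hp : p = C c * f + C d := by
    rw [hq]
    have : q = Polynomial.C c * Polynomial.X + Polynomial.C d := by rw [hd]; ring
    conv_lhs => rw [this]
    simp [algebraMap_eq]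
  intro g hg
  obtain ⟨r, hr⟩ := h.ker g hg
  refine ⟨r.comp (Polynomial.C c⁻¹ * (Polynomial.X - Polynomial.C d)), ?_⟩
  have e : Polynomial.aeval p (Polynomial.C c⁻¹ * (Polynomial.X - Polynomial.C d)) = f := by
    simp only [map_mul, map_sub, Polynomial.aeval_C, Polynomial.aeval_X, algebraMap_eq]
    rw [hp]
    have : (C c⁻¹ * C c : MvPolynomial (Fin 2) k) = 1 := by
      rw [← C_mul, inv_mul_cancel₀ hc0, C_1]
    linear_combination f * this
  rw [Polynomial.aeval_comp, hr, e]
end fieldcons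

lemma dv_bc {R S : Type*} [CommRing R] [CommRing S] (φ : R →+* S)
    (D : Derivation R (MvPolynomial (Fin 2) R) (MvPolynomial (Fin 2) R)) :
    dv (bc φ D) = map φ (dv D) := by
  simp [dv, bc, pderiv_map]

lemma dv_domain {R : Type*} [CommRing R] [IsDomain R] [CharZero R]
    {D : Derivation R (MvPolynomial (Fin 2) R) (MvPolynomial (Fin 2) R)}
    (hl : IsLN D) (hfpf : Fpf D) : dv D = 0 := by
  let φ : R →+* AlgebraicClosure (FractionRing R) :=
    (algebraMap (FractionRing R) (AlgebraicClosure (FractionRing R))).comp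
      (algebraMap R (FractionRing R))
  have hφ : Function.Injective φ :=
    (algebraMap (FractionRing R) (AlgebraicClosure (FractionRing R))).injective.comp
      (IsFractionRing.injective R (FractionRing R))
  have : CharZero (AlgebraicClosure (FractionRing R)) := charZero_of_injective_ringHom hφ
  have h := dv_field (bc_ln φ hl) (bc_fpf φ hfpf)
  rw [dv_bc] at h
  exact map_injective φ hφ (by rw [h, map_zero])

lemma dv_reduced {R : Type*} [CommRing R] [IsReduced R] [Algebra ℚ R]
    {D : Derivation R (MvPolynomial (Fin 2) R) (MvPolynomial (Fin 2) R)}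
    (hl : IsLN D) (hfpf : Fpf D) : dv D = 0 := by
  ext m
  rw [coeff_zero]
  apply IsNilpotent.eq_zero
  rw [← mem_nilradical, nilradical_eq_sInf, Ideal.mem_sInf]
  intro P hP
  have hP' : P.IsPrime := hP
  have : CharZero (R ⧸ P) := algebraRat.charZero _
  have h := dv_domain (bc_ln (Ideal.Quotient.mk P) hl) (bc_fpf (Ideal.Quotient.mk P) hfpf)
  rw [dv_bc] at h
  have h2 := congrArg (coeff m) h
  rw [coeff_map, coeff_zero, Ideal.Quotient.eq_zero_iff_mem] at h2
  exact h2

section integral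
variable {R : Type*} [CommRing R] [Algebra ℚ R]

/-- formal integration -/
noncomputable def integ (i : Fin 2) (a : MvPolynomial (Fin 2) R) : MvPolynomial (Fin 2) R :=
  ∑ m ∈ a.support, monomial (m + Finsupp.single i 1)
    (algebraMap ℚ R ((m i : ℚ) + 1)⁻¹ * coeff m a)

lemma coeff_integ (i : Fin 2) (a : MvPolynomial (Fin 2) R) (m : Fin 2 →₀ ℕ) :
    coeff (m + Finsupp.single i 1) (integ i a) = algebraMap ℚ R ((m i : ℚ) + 1)⁻¹ * coeff m a := by
  classical
  rw [integ, coeff_sum]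
  simp only [coeff_monomial, add_left_inj]
  rw [Finset.sum_ite_eq']
  split_ifs with h
  · rfl
  · rw [notMem_support_iff.1 h, mul_zero]

lemma coeff_integ_zero (i : Fin 2) (a : MvPolynomial (Fin 2) R) (m : Fin 2 →₀ ℕ) (hm : m i = 0) :
    coeff m (integ i a) = 0 := by
  classical
  rw [integ, coeff_sum]
  refine Finset.sum_eq_zero fun n _ => ?_
  rw [coeff_monomial, if_neg]
  rintro rfl
  simp at hm

lemma pderiv_integ (i : Fin 2) (a : MvPolynomial (Fin 2) R) : pderiv i (integ i a) = a := by
  ext m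
  rw [coeff_pderiv, coeff_integ]
  have : ((m i : ℕ) : R) + 1 = algebraMap ℚ R ((m i : ℚ) + 1) := by simp
  rw [this, mul_right_comm, ← map_mul, inv_mul_cancel₀ (by positivity), map_one, one_mul]

lemma pderiv_integ_ne {i j : Fin 2} (hij : i ≠ j) {a : MvPolynomial (Fin 2) R}
    (ha : pderiv j a = 0) : pderiv j (integ i a) = 0 := by
  ext m
  rw [coeff_pderiv, coeff_zero]
  by_cases hm : m i = 0
  · rw [coeff_integ_zero, zero_mul]
    simp [hm, hij.symm]
  · obtain ⟨n, rfl⟩ : ∃ n, m = n + Finsupp.single i 1 := by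
      refine ⟨m - Finsupp.single i 1, ?_⟩
      rw [tsub_add_cancel_of_le]
      rw [Finsupp.single_le_iff]; omega
    have h1 := congrArg (coeff n) ha
    rw [coeff_pderiv, coeff_zero] at h1
    rw [add_right_comm, coeff_integ, mul_assoc]
    simp only [Finsupp.add_apply, Finsupp.single_eq_of_ne hij.symm, add_zero]
    rw [h1, mul_zero]

lemma poincare (D : Derivation R (MvPolynomial (Fin 2) R) (MvPolynomial (Fin 2) R))
    (h : dv D = 0) : ∃ p, D = Jac p := by
  set u := D (X 0) with hu
  set v := D (X 1) with hv
  have h' : pderiv 0 u + pderiv 1 v = 0 := h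
  set q := integ 0 v with hq
  have hq0 : pderiv 0 q = v := pderiv_integ 0 v
  set r := -u - pderiv 1 q with hr
  have hr0 : pderiv 0 r = 0 := by
    rw [hr, map_sub, map_neg, pderiv_comm', hq0]
    linear_combination -h'
  have ht0 := pderiv_integ_ne (i := 1) (j := 0) (by decide) hr0
  have ht1 := pderiv_integ 1 r
  refine ⟨q + integ 1 r, ?_⟩
  apply derivation_ext
  intro i
  fin_cases i
  · show u = _
    erw [Jac_X0]
    rw [map_add, ht1, hr]; ring
  · show v = _
    erw [Jac_X1]
    rw [map_add, ht0, hq0]; ring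

end integral
end LND

namespace LND
open MvPolynomial

section descent
variable {K L : Type*} [Field K] [Field L] [Algebra K L] (φ : L →ₗ[K] K)

/-- apply a linear functional to the coefficients -/
noncomputable def Phi (F : MvPolynomial (Fin 2) L) : MvPolynomial (Fin 2) K :=
  ∑ m ∈ F.support, monomial m (φ (coeff m F))

lemma coeff_Phi (F : MvPolynomial (Fin 2) L) (m : Fin 2 →₀ ℕ) :
    coeff m (Phi φ F) = φ (coeff m F) := by
  classical
  rw [Phi, coeff_sum]
  simp only [coeff_monomial]
  rw [Finset.sum_ite_eq']
  split_ifs with h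
  · rfl
  · rw [notMem_support_iff.1 h, map_zero]

lemma Phi_add (F G : MvPolynomial (Fin 2) L) : Phi φ (F + G) = Phi φ F + Phi φ G := by
  ext m; simp [coeff_Phi]

lemma Phi_sub (F G : MvPolynomial (Fin 2) L) : Phi φ (F - G) = Phi φ F - Phi φ G := by
  ext m; simp [coeff_Phi]

lemma Phi_mul (a : MvPolynomial (Fin 2) K) (F : MvPolynomial (Fin 2) L) :
    Phi φ (map (algebraMap K L) a * F) = a * Phi φ F := by
  classical
  ext m
  rw [coeff_Phi, coeff_mul, coeff_mul, map_sum]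
  refine Finset.sum_congr rfl fun x _ => ?_
  rw [coeff_map, ← Algebra.smul_def, map_smul, smul_eq_mul, coeff_Phi]

lemma Phi_pderiv (i : Fin 2) (F : MvPolynomial (Fin 2) L) :
    Phi φ (pderiv i F) = pderiv i (Phi φ F) := by
  ext m
  rw [coeff_Phi, coeff_pderiv, coeff_pderiv, coeff_Phi]
  have : coeff (m + Finsupp.single i 1) F * ((m i : L) + 1) =
      ((m i : K) + 1) • coeff (m + Finsupp.single i 1) F := by
    rw [Algebra.smul_def]; simp [mul_comm]
  rw [this, map_smul, smul_eq_mul, mul_comm]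

lemma Phi_Jac (p : MvPolynomial (Fin 2) K) (s : MvPolynomial (Fin 2) L) :
    Phi φ (Jac (map (algebraMap K L) p) s) = Jac p (Phi φ s) := by
  simp only [Jac_apply, Phi_sub, pderiv_map, Phi_mul, Phi_pderiv]

lemma Phi_C (c : L) : Phi φ (C c) = C (φ c) := by
  classical
  ext m
  rw [coeff_Phi, coeff_C, coeff_C]
  split_ifs <;> simp

/-- apply a linear functional to the coefficients of a univariate polynomial -/
lemma Phi_aeval (p : MvPolynomial (Fin 2) K) (q : Polynomial L) :
    ∃ r : Polynomial K, Phi φ (Polynomial.aeval (map (algebraMap K L) p) q) =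
      Polynomial.aeval p r := by
  induction q using Polynomial.induction_on' with
  | add a b ha hb =>
    obtain ⟨r, hr⟩ := ha
    obtain ⟨t, ht⟩ := hb
    exact ⟨r + t, by rw [map_add, Phi_add, hr, ht, map_add]⟩
  | monomial n c =>
    refine ⟨Polynomial.monomial n (φ c), ?_⟩
    rw [Polynomial.aeval_monomial, Polynomial.aeval_monomial, algebraMap_eq, algebraMap_eq,
      ← map_pow, mul_comm, Phi_mul, Phi_C, mul_comm]

end descent

section frac
variable {S : Type*} [CommRing S] [IsDomain S]

lemma clear_mv (F : MvPolynomial (Fin 2) (FractionRing S)) : ∃ (d : S) (b : MvPolynomial (Fin 2) S),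
    d ≠ 0 ∧ map (algebraMap S (FractionRing S)) b = C (algebraMap S (FractionRing S) d) * F := by
  induction F using MvPolynomial.induction_on with
  | C a =>
    obtain ⟨x, y, hy, rfl⟩ := IsFractionRing.div_surjective (A := S) a
    refine ⟨y, C x, nonZeroDivisors.ne_zero hy, ?_⟩
    rw [map_C, ← C_mul, mul_div_cancel₀]
    simpa using nonZeroDivisors.ne_zero hy
  | add p q hp hq =>
    obtain ⟨d, b, hd, hb⟩ := hp
    obtain ⟨e, c, he, hc⟩ := hq
    refine ⟨d * e, C e * b + C d * c, mul_ne_zero hd he, ?_⟩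
    rw [map_add, map_mul, map_mul, hb, hc, map_C, map_C, map_mul, C_mul]
    ring
  | mul_X p i hp =>
    obtain ⟨d, b, hd, hb⟩ := hp
    exact ⟨d, b * X i, hd, by rw [map_mul, hb, map_X, mul_assoc]⟩

lemma clear_poly (F : Polynomial (FractionRing S)) : ∃ (d : S) (b : Polynomial S),
    d ≠ 0 ∧ Polynomial.map (algebraMap S (FractionRing S)) b =
      Polynomial.C (algebraMap S (FractionRing S) d) * F := by
  induction F using Polynomial.induction_on' with
  | monomial n a =>
    obtain ⟨x, y, hy, rfl⟩ := IsFractionRing.div_surjective (A := S) a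
    refine ⟨y, Polynomial.monomial n x, nonZeroDivisors.ne_zero hy, ?_⟩
    rw [Polynomial.map_monomial, Polynomial.C_mul_monomial, mul_div_cancel₀]
    simpa using nonZeroDivisors.ne_zero hy
  | add p q hp hq =>
    obtain ⟨d, b, hd, hb⟩ := hp
    obtain ⟨e, c, he, hc⟩ := hq
    refine ⟨d * e, Polynomial.C e * b + Polynomial.C d * c, mul_ne_zero hd he, ?_⟩
    rw [Polynomial.map_add, Polynomial.map_mul, Polynomial.map_mul, hb, hc, Polynomial.map_C,
      Polynomial.map_C, map_mul, Polynomial.C_mul]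
    ring

lemma map_aeval_poly {R T : Type*} [CommRing R] [CommRing T] (φ : R →+* T)
    (p : MvPolynomial (Fin 2) R) (q : Polynomial R) :
    map φ (Polynomial.aeval p q) = Polynomial.aeval (map φ p) (Polynomial.map φ q) := by
  rw [Polynomial.aeval_def, Polynomial.hom_eval₂, Polynomial.aeval_def, Polynomial.eval₂_map]
  congr 1
  ext; simp [algebraMap_eq]

lemma frac_data [CharZero S] {p : MvPolynomial (Fin 2) S} (hl : IsLN (Jac p)) (hf : Fpf (Jac p)) :
    (∃ (d : S) (b : MvPolynomial (Fin 2) S), d ≠ 0 ∧ Jac p b = C d) ∧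
    ∀ g, Jac p g = 0 → ∃ (d : S) (h : Polynomial S), d ≠ 0 ∧ C d * g = Polynomial.aeval p h := by
  let ι := algebraMap S (FractionRing S)
  let κ := algebraMap (FractionRing S) (AlgebraicClosure (FractionRing S))
  have hι : Function.Injective ι := IsFractionRing.injective S (FractionRing S)
  have hκ : Function.Injective κ := κ.injective
  have : CharZero (AlgebraicClosure (FractionRing S)) :=
    charZero_of_injective_ringHom (f := κ.comp ι) (hκ.comp hι)
  obtain ⟨φ, hφ⟩ := LinearMap.exists_leftInverse_of_injective
    (Algebra.linearMap (FractionRing S) (AlgebraicClosure (FractionRing S)))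
    (LinearMap.ker_eq_bot.2 hκ)
  have hφ1 : ∀ x, φ (κ x) = x := fun x => LinearMap.congr_fun hφ x
  have hl' := bc_ln (κ.comp ι) hl
  have hf' := bc_fpf (κ.comp ι) hf
  have hbc : bc (κ.comp ι) (Jac p) = Jac (map κ (map ι p)) := by
    rw [bc_Jac, map_map]
  rw [hbc] at hl' hf'
  obtain ⟨s, hs⟩ := jac_field hl' hf'
  refine ⟨?_, ?_⟩
  · obtain ⟨d, b, hd, hb⟩ := clear_mv (Phi φ s)
    refine ⟨d, b, hd, ?_⟩
    apply map_injective ι hι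
    have h1 := Phi_Jac φ (map ι p) s
    have h2 : Jac (map (algebraMap _ _) (map ι p)) s = 1 := hs.2.1
    rw [h2, ← C_1, Phi_C] at h1
    have h3 : φ 1 = 1 := by have := hφ1 1; rwa [map_one] at this
    rw [← bc_map, bc_Jac, hb, Derivation.leibniz, ← h1, h3]
    simp [ι]
  · intro g hg
    have hg' : Jac (map κ (map ι p)) (map κ (map ι g)) = 0 := by
      rw [← hbc, map_map, bc_map, hg, map_zero]
    obtain ⟨q, hq⟩ := hs.ker _ hg'
    obtain ⟨r, hr⟩ := Phi_aeval φ (map ι p) q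
    have h1 := Phi_mul φ (map ι g) 1
    have h3 : φ 1 = 1 := by have := hφ1 1; rwa [map_one] at this
    rw [mul_one, ← C_1, Phi_C, h3, C_1, mul_one] at h1
    have h2 : map ι g = Polynomial.aeval (map ι p) r := by
      rw [← hr, ← h1]
      exact congrArg (Phi φ) hq
    obtain ⟨d, b, hd, hb⟩ := clear_poly r
    refine ⟨d, b, hd, ?_⟩
    apply map_injective ι hι
    rw [map_aeval_poly, hb, map_mul, map_mul, h2, map_C, Polynomial.aeval_C, algebraMap_eq]

end frac
end LND

namespace LND
open MvPolynomial

section steps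
variable {S : Type*} [CommRing S]

lemma mv_single {a : S} {F : MvPolynomial (Fin 2) S}
    (h : map (Ideal.Quotient.mk (Ideal.span {a})) F = 0) : ∃ u, F = C a * u := by
  have h1 : F ∈ RingHom.ker (map (σ := Fin 2) (Ideal.Quotient.mk (Ideal.span {a}))) := h
  rw [MvPolynomial.ker_map, Ideal.mk_ker, Ideal.map_span, Set.image_singleton,
    Ideal.mem_span_singleton'] at h1
  obtain ⟨u, hu⟩ := h1
  exact ⟨u, by rw [← hu]; ring⟩

lemma mv_pair {a b : S} {F : MvPolynomial (Fin 2) S}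
    (h : map (Ideal.Quotient.mk (Ideal.span {a, b})) F = 0) : ∃ u v, F = C a * u + C b * v := by
  have h1 : F ∈ RingHom.ker (map (σ := Fin 2) (Ideal.Quotient.mk (Ideal.span {a, b}))) := h
  rw [MvPolynomial.ker_map, Ideal.mk_ker, Ideal.map_span, Set.image_pair,
    Ideal.mem_span_pair] at h1
  obtain ⟨u, v, hu⟩ := h1
  exact ⟨u, v, by rw [← hu]; ring⟩

lemma poly_single {a : S} {F : Polynomial S}
    (h : Polynomial.map (Ideal.Quotient.mk (Ideal.span {a})) F = 0) :
    ∃ u, F = Polynomial.C a * u := by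
  have h1 : F ∈ RingHom.ker (Polynomial.mapRingHom (Ideal.Quotient.mk (Ideal.span {a}))) := h
  rw [Polynomial.ker_mapRingHom, Ideal.mk_ker, Ideal.map_span, Set.image_singleton,
    Ideal.mem_span_singleton'] at h1
  obtain ⟨u, hu⟩ := h1
  exact ⟨u, by rw [← hu]; ring⟩

lemma poly_pair {a b : S} {F : Polynomial S}
    (h : Polynomial.map (Ideal.Quotient.mk (Ideal.span {a, b})) F = 0) :
    ∃ u v, F = Polynomial.C a * u + Polynomial.C b * v := by
  have h1 : F ∈ RingHom.ker (Polynomial.mapRingHom (Ideal.Quotient.mk (Ideal.span {a, b}))) := h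
  rw [Polynomial.ker_mapRingHom, Ideal.mk_ker, Ideal.map_span, Set.image_pair,
    Ideal.mem_span_pair] at h1
  obtain ⟨u, v, hu⟩ := h1
  exact ⟨u, v, by rw [← hu]; ring⟩

lemma map_mk_C {a : S} (u : MvPolynomial (Fin 2) S) :
    map (Ideal.Quotient.mk (Ideal.span {a})) (C a * u) = 0 := by
  rw [map_mul, map_C, Ideal.Quotient.eq_zero_iff_mem.2 (Ideal.mem_span_singleton_self a), C_0,
    zero_mul]

lemma map_mk_C1 {a b : S} (u : MvPolynomial (Fin 2) S) :
    map (Ideal.Quotient.mk (Ideal.span {a, b})) (C a * u) = 0 := by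
  rw [map_mul, map_C, Ideal.Quotient.eq_zero_iff_mem.2 (Ideal.subset_span (by simp)), C_0,
    zero_mul]

lemma map_mk_C2 {a b : S} (u : MvPolynomial (Fin 2) S) :
    map (Ideal.Quotient.mk (Ideal.span {a, b})) (C b * u) = 0 := by
  rw [map_mul, map_C, Ideal.Quotient.eq_zero_iff_mem.2 (Ideal.subset_span (by simp)), C_0,
    zero_mul]

lemma D_C (D : Derivation S (MvPolynomial (Fin 2) S) (MvPolynomial (Fin 2) S)) (a : S)
    (u : MvPolynomial (Fin 2) S) : D (C a * u) = C a * D u := by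
  rw [C_mul', D.map_smul, C_mul']

lemma D_poly (D : Derivation S (MvPolynomial (Fin 2) S) (MvPolynomial (Fin 2) S))
    {p : MvPolynomial (Fin 2) S} (hp : D p = 0) (q : Polynomial S) :
    D (Polynomial.aeval p q) = 0 := by
  rw [Derivation.map_aeval, hp, smul_zero]

variable [Algebra ℚ S]

lemma ker_lift {I : Ideal S} {D : Derivation S (MvPolynomial (Fin 2) S) (MvPolynomial (Fin 2) S)}
    {p : MvPolynomial (Fin 2) S} {s : MvPolynomial (Fin 2) (S ⧸ I)}
    (h : Good (bc (Ideal.Quotient.mk I) D) (map (Ideal.Quotient.mk I) p) s)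
    (g : MvPolynomial (Fin 2) S) (hg : map (Ideal.Quotient.mk I) (D g) = 0) :
    ∃ q : Polynomial S, map (Ideal.Quotient.mk I) (g - Polynomial.aeval p q) = 0 := by
  obtain ⟨q, hq⟩ := h.ker (map (Ideal.Quotient.mk I) g) (by rw [bc_map, hg])
  obtain ⟨q, rfl⟩ := Polynomial.map_surjective _ Ideal.Quotient.mk_surjective q
  exact ⟨q, by rw [map_sub, hq, map_aeval_poly, sub_self]⟩

/-- domain step -/
lemma domain_step [IsNoetherianRing S] [IsDomain S] {p : MvPolynomial (Fin 2) S}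
    (hl : IsLN (Jac p)) (hf : Fpf (Jac p))
    (ih : ∀ I : Ideal S, I ≠ ⊥ → ∃ s, Good (bc (Ideal.Quotient.mk I) (Jac p))
      (map (Ideal.Quotient.mk I) p) s) : ∃ s, Good (Jac p) p s := by
  have : CharZero S := algebraRat.charZero S
  obtain ⟨⟨d, b, hd, hb⟩, hk⟩ := frac_data hl hf
  have cancel : ∀ d : S, d ≠ 0 → ∀ x y : MvPolynomial (Fin 2) S, C d * x = C d * y → x = y :=
    fun d hd x y h => mul_left_cancel₀ (by simpa using hd) h
  have hne : ∀ d : S, d ≠ 0 → Ideal.span {d} ≠ ⊥ := fun d hd => by simpa using hd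
  obtain ⟨s, hs⟩ := ih _ (hne d hd)
  obtain ⟨q, hq⟩ := ker_lift hs b (by rw [hb, ← mul_one (C d), map_mk_C])
  obtain ⟨b', hb'⟩ := mv_single hq
  refine ⟨b', good_of hl (Jac_self p) ?_ ?_⟩
  · apply cancel d hd
    rw [← D_C, ← hb', map_sub, D_poly _ (Jac_self p), hb, sub_zero, mul_one]
  · intro g hg
    obtain ⟨e, h, he, hh⟩ := hk g hg
    obtain ⟨s', hs'⟩ := ih _ (hne e he)
    have h0 := hs'.injf (Polynomial.map _ h) (by rw [← map_aeval_poly, ← hh, map_mk_C])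
    obtain ⟨u, rfl⟩ := poly_single h0
    refine ⟨u, cancel e he _ _ ?_⟩
    rw [hh, map_mul, Polynomial.aeval_C, algebraMap_eq]

/-- fibre product step -/
lemma fiber_step [IsNoetherianRing S] [IsReduced S] {p : MvPolynomial (Fin 2) S}
    (hl : IsLN (Jac p)) {a b : S} (ha : a ≠ 0) (hb : b ≠ 0) (hab : a * b = 0)
    (ih : ∀ I : Ideal S, I ≠ ⊥ → ∃ s, Good (bc (Ideal.Quotient.mk I) (Jac p))
      (map (Ideal.Quotient.mk I) p) s) : ∃ s, Good (Jac p) p s := by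
  have hne : ∀ d : S, d ≠ 0 → Ideal.span {d} ≠ ⊥ := fun d hd => by simpa using hd
  have zero : ∀ u v F : MvPolynomial (Fin 2) S, F = C a * u → F = C b * v → F = 0 := by
    intro u v F h1 h2
    ext m
    have h3 := congrArg (coeff m) h1
    have h4 := congrArg (coeff m) h2
    rw [coeff_C_mul] at h3 h4
    rw [coeff_zero]
    apply pow_eq_zero_iff (two_ne_zero) |>.1
    rw [sq]; nth_rw 1 [h3]; rw [h4]
    linear_combination (coeff m u) * (coeff m v) * hab
  obtain ⟨s1, h1⟩ := ih _ (hne a ha)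
  obtain ⟨s2, h2⟩ := ih _ (hne b hb)
  obtain ⟨s3, h3⟩ := ih (Ideal.span {a, b}) (by
    intro h
    rw [Ideal.span_eq_bot] at h
    exact ha (h a (by simp)))
  obtain ⟨s1, rfl⟩ := map_surjective _ Ideal.Quotient.mk_surjective s1
  obtain ⟨s2, rfl⟩ := map_surjective _ Ideal.Quotient.mk_surjective s2
  obtain ⟨w1, hw1⟩ : ∃ w, Jac p s1 - 1 = C a * w := by
    apply mv_single
    rw [map_sub, ← bc_map, h1.2.1, map_one, sub_self]
  obtain ⟨w2, hw2⟩ : ∃ w, Jac p s2 - 1 = C b * w := by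
    apply mv_single
    rw [map_sub, ← bc_map, h2.2.1, map_one, sub_self]
  obtain ⟨q, hq⟩ := ker_lift h3 (s1 - s2) (by
    have : Jac p (s1 - s2) = C a * w1 - C b * w2 := by rw [map_sub, ← hw1, ← hw2]; ring
    rw [this, map_sub, map_mk_C1, map_mk_C2, sub_zero])
  obtain ⟨u, v, huv⟩ := mv_pair hq
  refine ⟨s1 - C a * u - Polynomial.aeval p q, good_of hl (Jac_self p) ?_ ?_⟩
  · apply sub_eq_zero.1
    apply zero (w1 - Jac p u) (w2 + Jac p v)
    · rw [map_sub, map_sub, D_C, D_poly _ (Jac_self p)]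
      linear_combination hw1
    · have : s1 - C a * u - Polynomial.aeval p q = s2 + C b * v := by linear_combination huv
      rw [this, map_add, D_C]
      linear_combination hw2
  · intro g hg
    obtain ⟨q1, hq1⟩ := ker_lift h1 g (by rw [hg, map_zero])
    obtain ⟨q2, hq2⟩ := ker_lift h2 g (by rw [hg, map_zero])
    obtain ⟨x, hx⟩ := mv_single hq1
    obtain ⟨y, hy⟩ := mv_single hq2
    have h0 := h3.injf (Polynomial.map _ (q1 - q2)) (by
      rw [← map_aeval_poly, map_sub]
      have : Polynomial.aeval p q1 - Polynomial.aeval p q2 = C b * y - C a * x := by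
        linear_combination hy - hx
      rw [this, map_sub, map_mk_C1, map_mk_C2, sub_zero])
    obtain ⟨r1, r2, hr⟩ := poly_pair h0
    refine ⟨q1 - Polynomial.C a * r1, ?_⟩
    apply sub_eq_zero.1
    apply zero (x + Polynomial.aeval p r1) (y - Polynomial.aeval p r2)
    · rw [map_sub, map_mul, Polynomial.aeval_C, algebraMap_eq]
      linear_combination hx
    · have : q1 - Polynomial.C a * r1 = q2 + Polynomial.C b * r2 := by linear_combination hr
      rw [this, map_add, map_mul, Polynomial.aeval_C, algebraMap_eq]
      linear_combination hy

lemma map_aeval2 {T : Type*} [CommRing T] (φ : S →+* T) (f s F : MvPolynomial (Fin 2) S) :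
    map φ (aeval ![f, s] F) = aeval ![map φ f, map φ s] (map φ F) := by
  induction F using MvPolynomial.induction_on with
  | C a => simp [algebraMap_eq]
  | add p q hp hq => simp only [map_add, hp, hq]
  | mul_X p i hp =>
    simp only [map_mul, hp, map_X, aeval_X]
    fin_cases i <;> simp

/-- square-zero step -/
lemma sqzero_lift {D : Derivation S (MvPolynomial (Fin 2) S) (MvPolynomial (Fin 2) S)}
    {a : S} {f s : MvPolynomial (Fin 2) S}
    (h : Good (bc (Ideal.Quotient.mk (Ideal.span {a})) D)
      (map (Ideal.Quotient.mk (Ideal.span {a})) f) (map (Ideal.Quotient.mk (Ideal.span {a})) s))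
    (y : MvPolynomial (Fin 2) S) : ∃ (F y' : MvPolynomial (Fin 2) S), y = aeval ![f, s] F + C a * y' := by
  obtain ⟨F, hF⟩ := h.2.2.2 (map (Ideal.Quotient.mk (Ideal.span {a})) y)
  obtain ⟨F, rfl⟩ := map_surjective _ Ideal.Quotient.mk_surjective F
  obtain ⟨y', hy'⟩ : ∃ w, y - aeval ![f, s] F = C a * w := by
    apply mv_single
    rw [map_sub, map_aeval2, hF, sub_self]
  exact ⟨F, y', by rw [← hy']; ring⟩

lemma sqzero_surj {D : Derivation S (MvPolynomial (Fin 2) S) (MvPolynomial (Fin 2) S)}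
    {a : S} (ha : a * a = 0) {f s : MvPolynomial (Fin 2) S}
    (h : Good (bc (Ideal.Quotient.mk (Ideal.span {a})) D)
      (map (Ideal.Quotient.mk (Ideal.span {a})) f) (map (Ideal.Quotient.mk (Ideal.span {a})) s)) :
    Function.Surjective (aeval ![f, s] : MvPolynomial (Fin 2) S →ₐ[S] MvPolynomial (Fin 2) S) := by
  have hC : (C a * C a : MvPolynomial (Fin 2) S) = 0 := by rw [← C_mul, ha, C_0]
  intro y
  obtain ⟨F, y', rfl⟩ := sqzero_lift h y
  obtain ⟨G, z, rfl⟩ := sqzero_lift h y'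
  refine ⟨F + C a * G, ?_⟩
  rw [map_add, map_mul, aeval_C, algebraMap_eq]
  linear_combination (-z) * hC

lemma sqzero_solve {D : Derivation S (MvPolynomial (Fin 2) S) (MvPolynomial (Fin 2) S)}
    {a : S} (ha : a * a = 0) {f s : MvPolynomial (Fin 2) S}
    (h : Good (bc (Ideal.Quotient.mk (Ideal.span {a})) D)
      (map (Ideal.Quotient.mk (Ideal.span {a})) f) (map (Ideal.Quotient.mk (Ideal.span {a})) s))
    (y : MvPolynomial (Fin 2) S) : ∃ m, D (C a * m) = C a * y := by
  have hC : (C a * C a : MvPolynomial (Fin 2) S) = 0 := by rw [← C_mul, ha, C_0]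
  obtain ⟨w1, hw1⟩ : ∃ w, D f = C a * w := by
    apply mv_single
    rw [← bc_map, h.1]
  obtain ⟨w2, hw2⟩ : ∃ w, D s - 1 = C a * w := by
    apply mv_single
    rw [map_sub, ← bc_map, h.2.1, map_one, sub_self]
  obtain ⟨F, y', rfl⟩ := sqzero_lift h y
  refine ⟨aeval ![f, s] (integ 1 F), ?_⟩
  rw [D_C, chain, pderiv_integ, hw1, sub_eq_iff_eq_add.1 hw2]
  linear_combination (aeval ![f, s] (pderiv 0 (integ 1 F)) * w1 + aeval ![f, s] F * w2 - y') * hC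

lemma sqzero_step [IsNoetherianRing S]
    {D : Derivation S (MvPolynomial (Fin 2) S) (MvPolynomial (Fin 2) S)}
    {a : S} (ha : a * a = 0) {f s : MvPolynomial (Fin 2) S}
    (h : Good (bc (Ideal.Quotient.mk (Ideal.span {a})) D)
      (map (Ideal.Quotient.mk (Ideal.span {a})) f) (map (Ideal.Quotient.mk (Ideal.span {a})) s)) :
    ∃ f' s', Good D f' s' ∧ (D f = 0 → f' = f) := by
  obtain ⟨w1, hw1⟩ : ∃ w, D f = C a * w := by
    apply mv_single
    rw [← bc_map, h.1]
  obtain ⟨w2, hw2⟩ : ∃ w, D s - 1 = C a * w := by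
    apply mv_single
    rw [map_sub, ← bc_map, h.2.1, map_one, sub_self]
  obtain ⟨m2, hm2⟩ := sqzero_solve ha h w2
  obtain ⟨m1, hm1, hm1'⟩ : ∃ m1, D (C a * m1) = C a * w1 ∧ (D f = 0 → m1 = 0) := by
    by_cases h0 : D f = 0
    · exact ⟨0, by rw [← hw1, h0, mul_zero, map_zero], fun _ => rfl⟩
    · obtain ⟨m1, hm1⟩ := sqzero_solve ha h w1
      exact ⟨m1, hm1, fun h => absurd h h0⟩
  have h' : Good (bc (Ideal.Quotient.mk (Ideal.span {a})) D)
      (map (Ideal.Quotient.mk (Ideal.span {a})) (f - C a * m1))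
      (map (Ideal.Quotient.mk (Ideal.span {a})) (s - C a * m2)) := by
    rw [map_sub, map_sub, map_mk_C, map_mk_C, sub_zero, sub_zero]; exact h
  refine ⟨f - C a * m1, s - C a * m2, ⟨?_, ?_, bij_of_surj (sqzero_surj ha h')⟩, ?_⟩
  · rw [map_sub, hm1, hw1, sub_self]
  · rw [map_sub, hm2, ← hw2]; ring
  · intro h0
    rw [hm1' h0, mul_zero, sub_zero]

end steps


lemma noeth_ind (P : ∀ (S : Type u) [CommRing S] [Algebra ℚ S], Prop)
    (step : ∀ (S : Type u) [CommRing S] [Algebra ℚ S] [IsNoetherianRing S],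
      (∀ J : Ideal S, J ≠ ⊥ → P (S ⧸ J)) → P S)
    (R : Type u) [CommRing R] [Algebra ℚ R] [IsNoetherianRing R] : P R := by
  have key : ∀ I : Ideal R, ∀ (S : Type u) [CommRing S] [Algebra ℚ S] (π : R →+* S),
      Function.Surjective π → RingHom.ker π = I → P S := by
    intro I
    induction I using WellFoundedGT.induction with
    | ind I ih =>
      intro S _ _ π hπ hI
      have : IsNoetherianRing S := isNoetherianRing_of_surjective R S π hπ
      apply step
      intro J hJ
      refine ih (J.comap π) ?_ (S ⧸ J) ((Ideal.Quotient.mk J).comp π)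
        (Ideal.Quotient.mk_surjective.comp hπ) ?_
      · rw [← hI]
        refine lt_of_le_of_ne (fun x hx => ?_) (fun h => hJ ?_)
        · rw [Ideal.mem_comap, (RingHom.mem_ker).1 hx]; exact J.zero_mem
        · rw [eq_bot_iff]
          intro y hy
          obtain ⟨x, rfl⟩ := hπ y
          have : x ∈ RingHom.ker π := by rw [h]; exact hy
          exact this
      · rw [← RingHom.comap_ker, Ideal.mk_ker]
  exact key _ R (RingHom.id R) Function.surjective_id rfl

section stages

lemma exists_sq_zero {S : Type*} [CommRing S] (h : ¬ IsReduced S) : ∃ a : S, a ≠ 0 ∧ a * a = 0 := by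
  rw [isReduced_iff_pow_one_lt 2 (by norm_num)] at h
  push Not at h
  obtain ⟨a, h1, h2⟩ := h
  exact ⟨a, h2, by rw [← sq, h1]⟩

lemma stage1 (R : Type u) [CommRing R] [Algebra ℚ R] [IsNoetherianRing R]
    (p : MvPolynomial (Fin 2) R) (hl : IsLN (Jac p)) (hf : Fpf (Jac p)) :
    ∃ s, Good (Jac p) p s := by
  refine noeth_ind (fun S _ _ => ∀ p : MvPolynomial (Fin 2) S, IsLN (Jac p) → Fpf (Jac p) →
    ∃ s, Good (Jac p) p s) ?_ R p hl hf
  intro S _ _ _ ih p hl hf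
  have ih' : ∀ I : Ideal S, I ≠ ⊥ → ∃ s, Good (bc (Ideal.Quotient.mk I) (Jac p))
      (map (Ideal.Quotient.mk I) p) s := by
    intro I hI
    have h1 := bc_ln (Ideal.Quotient.mk I) hl
    have h2 := bc_fpf (Ideal.Quotient.mk I) hf
    rw [bc_Jac] at h1 h2 ⊢
    exact ih I hI _ h1 h2
  by_cases hr : IsReduced S
  · by_cases hd : NoZeroDivisors S
    · rcases subsingleton_or_nontrivial S with hs | hs
      · have : Subsingleton (MvPolynomial (Fin 2) S) := inferInstance
        exact ⟨0, Subsingleton.elim _ _, Subsingleton.elim _ _,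
          fun x y _ => Subsingleton.elim _ _, fun x => ⟨x, Subsingleton.elim _ _⟩⟩
      · have : IsDomain S := NoZeroDivisors.to_isDomain S
        exact domain_step hl hf ih'
    · rw [noZeroDivisors_iff] at hd
      push Not at hd
      obtain ⟨a, b, hab, ha, hb⟩ := hd
      exact fiber_step hl ha hb hab ih'
  · obtain ⟨a, ha, haa⟩ := exists_sq_zero hr
    obtain ⟨s, hs⟩ := ih' (Ideal.span {a}) (by simpa using ha)
    obtain ⟨s, rfl⟩ := map_surjective _ Ideal.Quotient.mk_surjective s
    obtain ⟨f', s', h, h'⟩ := sqzero_step haa hs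
    rw [h' (Jac_self p)] at h
    exact ⟨s', h⟩

lemma stage2 (R : Type u) [CommRing R] [Algebra ℚ R] [IsNoetherianRing R]
    (D : Derivation R (MvPolynomial (Fin 2) R) (MvPolynomial (Fin 2) R))
    (hl : IsLN D) (hf : Fpf D) : ∃ f s, Good D f s := by
  refine noeth_ind (fun S _ _ => ∀ D : Derivation S (MvPolynomial (Fin 2) S)
    (MvPolynomial (Fin 2) S), IsLN D → Fpf D → ∃ f s, Good D f s) ?_ R D hl hf
  intro S _ _ _ ih D hl hf
  by_cases hr : IsReduced S
  · obtain ⟨p, rfl⟩ := poincare D (dv_reduced hl hf)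
    exact ⟨p, stage1 S p hl hf⟩
  · obtain ⟨a, ha, haa⟩ := exists_sq_zero hr
    obtain ⟨f, s, hs⟩ := ih (Ideal.span {a}) (by simpa using ha) _ (bc_ln _ hl) (bc_fpf _ hf)
    obtain ⟨s, rfl⟩ := map_surjective _ Ideal.Quotient.mk_surjective s
    obtain ⟨f, rfl⟩ := map_surjective _ Ideal.Quotient.mk_surjective f
    obtain ⟨f', s', h, h'⟩ := sqzero_step haa hs
    exact ⟨f', s', h⟩

end stages
end LND

namespace LND
open MvPolynomial

lemma bc_good {R S : Type*} [CommRing R] [CommRing S] [Algebra ℚ R] (φ : R →+* S)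
    {D : Derivation R (MvPolynomial (Fin 2) R) (MvPolynomial (Fin 2) R)}
    {f s : MvPolynomial (Fin 2) R} (h : Good D f s) :
    Good (bc φ D) (map φ f) (map φ s) := by
  refine ⟨by rw [bc_map, h.1, map_zero], by rw [bc_map, h.2.1, map_one], ?_⟩
  obtain ⟨G0, h0⟩ := h.2.2.2 (X 0)
  obtain ⟨G1, h1⟩ := h.2.2.2 (X 1)
  have hcomp : ∀ (f s G0 G1 F : MvPolynomial (Fin 2) S), aeval ![f, s] (aeval ![G0, G1] F) =
      aeval ![aeval ![f, s] G0, aeval ![f, s] G1] F := by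
    intro f s G0 G1 F
    have : (aeval ![f, s]).comp (aeval ![G0, G1]) =
        (aeval ![aeval ![f, s] G0, aeval ![f, s] G1] :
          MvPolynomial (Fin 2) S →ₐ[S] MvPolynomial (Fin 2) S) := by
      apply algHom_ext
      intro i
      fin_cases i <;> simp
    exact congrArg (fun ψ => ψ F) this
  have hcompR : ∀ (f s G0 G1 F : MvPolynomial (Fin 2) R), aeval ![f, s] (aeval ![G0, G1] F) =
      aeval ![aeval ![f, s] G0, aeval ![f, s] G1] F := by
    intro f s G0 G1 F
    have : (aeval ![f, s]).comp (aeval ![G0, G1]) =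
        (aeval ![aeval ![f, s] G0, aeval ![f, s] G1] :
          MvPolynomial (Fin 2) R →ₐ[R] MvPolynomial (Fin 2) R) := by
      apply algHom_ext
      intro i
      fin_cases i <;> simp
    exact congrArg (fun ψ => ψ F) this
  have h2 : aeval ![G0, G1] f = X 0 := by
    apply h.2.2.1
    rw [hcompR, h0, h1, aeval_X01]; simp
  have h3 : aeval ![G0, G1] s = X 1 := by
    apply h.2.2.1
    rw [hcompR, h0, h1, aeval_X01]; simp
  refine Function.bijective_iff_has_inverse.2 ⟨aeval ![map φ G0, map φ G1], fun x => ?_,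
    fun x => ?_⟩
  · rw [hcomp, ← map_aeval2, ← map_aeval2, h2, h3, map_X, map_X, aeval_X01]
  · rw [hcomp, ← map_aeval2, ← map_aeval2, h0, h1, map_X, map_X, aeval_X01]

lemma lift_poly {R : Type*} [CommRing R] [Algebra ℚ R] (R0 : Subalgebra ℚ R)
    (p : MvPolynomial (Fin 2) R) (h : ∀ m ∈ p.support, coeff m p ∈ R0) :
    ∃ p0 : MvPolynomial (Fin 2) R0, map R0.val.toRingHom p0 = p := by
  classical
  refine ⟨∑ m ∈ p.support.attach, monomial m.1 ⟨coeff m.1 p, h m.1 m.2⟩, ?_⟩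
  rw [map_sum]
  conv_rhs => rw [p.as_sum, ← Finset.sum_attach]
  refine Finset.sum_congr rfl fun m _ => ?_
  rw [map_monomial]; rfl


lemma stage3 (R : Type u) [CommRing R] [Algebra ℚ R]
    (D : Derivation R (MvPolynomial (Fin 2) R) (MvPolynomial (Fin 2) R))
    (hl : IsLN D) (hf : Fpf D) : ∃ f s, Good D f s := by
  classical
  obtain ⟨a, b, hab⟩ := hf
  let T : MvPolynomial (Fin 2) R → Finset R := fun p => p.support.image (fun m => coeff m p)
  let U : Finset R := T (D (X 0)) ∪ T (D (X 1)) ∪ T a ∪ T b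
  let R0 : Subalgebra ℚ R := Algebra.adjoin ℚ (U : Set R)
  have hR0 : IsNoetherianRing R0 := by
    have : Algebra.FiniteType ℚ R0 := (Subalgebra.fg_iff_finiteType R0).1 ⟨U, rfl⟩
    exact Algebra.FiniteType.isNoetherianRing ℚ R0
  have hmem : ∀ p, T p ⊆ U → ∃ p0 : MvPolynomial (Fin 2) R0, map R0.val.toRingHom p0 = p := by
    intro p hp
    apply lift_poly
    intro m hm
    exact Algebra.subset_adjoin (hp (Finset.mem_image_of_mem _ hm))
  have hinj : Function.Injective (map (σ := Fin 2) R0.val.toRingHom) :=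
    map_injective _ Subtype.val_injective
  obtain ⟨d0, hd0⟩ := hmem (D (X 0)) (by intro x hx; simp only [U, Finset.mem_union]; tauto)
  obtain ⟨d1, hd1⟩ := hmem (D (X 1)) (by intro x hx; simp only [U, Finset.mem_union]; tauto)
  obtain ⟨a0, ha0⟩ := hmem a (by intro x hx; simp only [U, Finset.mem_union]; tauto)
  obtain ⟨b0, hb0⟩ := hmem b (by intro x hx; simp only [U, Finset.mem_union]; tauto)
  let D0 : Derivation R0 (MvPolynomial (Fin 2) R0) (MvPolynomial (Fin 2) R0) :=
    mkDerivation R0 ![d0, d1]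
  have hD : bc R0.val.toRingHom D0 = D := by
    apply derivation_ext
    intro i
    fin_cases i
    · simp [bc, D0, ← hd0]
    · simp [bc, D0, ← hd1]
  have hl0 : IsLN D0 := by
    intro x
    obtain ⟨n, hn⟩ := hl (map R0.val.toRingHom x)
    refine ⟨n, hinj ?_⟩
    rw [← bc_iter, hD, hn, map_zero]
  have hf0 : Fpf D0 := by
    refine ⟨a0, b0, hinj ?_⟩
    rw [map_add, map_mul, map_mul, ← bc_map, ← bc_map, hD, ha0, hb0, map_X, map_X, hab, map_one]
  obtain ⟨f, s, h⟩ := stage2 R0 D0 hl0 hf0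
  have := bc_good R0.val.toRingHom h
  rw [hD] at this
  exact ⟨_, _, this⟩

end LND

theorem fpf_lnd_on_polynomial_ring_two_vars (R : Type*) [CommRing R] [Algebra ℚ R]
    (D : Derivation R (MvPolynomial (Fin 2) R) (MvPolynomial (Fin 2) R))
    (hlnd : ∀ a : MvPolynomial (Fin 2) R, ∃ k : ℕ, (fun b => D b)^[k] a = 0)
    (hfpf : Ideal.span (Set.range (fun a => D a)) = (⊤ : Ideal (MvPolynomial (Fin 2) R))) :
    ∃ K : Subalgebra R (MvPolynomial (Fin 2) R),
      (∀ a, a ∈ K ↔ D a = 0) ∧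
      Nonempty (K ≃ₐ[R] Polynomial R) ∧
      Nonempty (MvPolynomial (Fin 2) R ≃ₐ[K] Polynomial K) := by
  have hf : LND.Fpf D := by
    have h1 : (1 : MvPolynomial (Fin 2) R) ∈ Ideal.span {D (MvPolynomial.X 0), D (MvPolynomial.X 1)} := by
      have h2 : Ideal.span (Set.range (fun a => D a)) ≤
          Ideal.span {D (MvPolynomial.X 0), D (MvPolynomial.X 1)} := by
        rw [Ideal.span_le]
        rintro _ ⟨a, rfl⟩
        show D a ∈ _
        rw [LND.D_eq D a, SetLike.mem_coe, Ideal.mem_span_pair]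
        exact ⟨_, _, rfl⟩
      rw [hfpf] at h2
      exact h2 trivial
    exact Ideal.mem_span_pair.1 h1
  obtain ⟨f, s, h⟩ := LND.stage3 R D hlnd hf
  refine ⟨LND.ker D, fun a => LND.mem_ker D, ⟨?_⟩, ⟨?_⟩⟩
  · let f' : LND.ker D := ⟨f, h.1⟩
    have hv : ∀ q : Polynomial R, ((Polynomial.aeval f' q : LND.ker D) : MvPolynomial (Fin 2) R) =
        Polynomial.aeval f q := fun q =>
      (Polynomial.aeval_algHom_apply (LND.ker D).val f' q).symm
    refine (AlgEquiv.ofBijective (Polynomial.aeval f') ⟨?_, ?_⟩).symm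
    · rw [injective_iff_map_eq_zero]
      intro q hq
      apply h.injf
      rw [← hv, hq]; rfl
    · intro g
      obtain ⟨q, hq⟩ := h.ker g.1 g.2
      exact ⟨q, Subtype.ext (by rw [hv, hq])⟩
  · refine (AlgEquiv.ofBijective (Polynomial.aeval s : Polynomial (LND.ker D) →ₐ[LND.ker D] _)
      ⟨?_, ?_⟩).symm
    · rw [injective_iff_map_eq_zero]
      intro q hq
      exact LND.slice_inj D h.2.1 q hq
    · intro a
      obtain ⟨n, hn⟩ := hlnd a
      exact LND.slice_surj D h.2.1 n a hn
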